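/- Let S be a smooth cubic surface in P^3 over a field K and let ℓ be a K-line contained in S. Then every point P ∈ ℓ(K) is either parabolic or K-hyperbolic. Moreover: (i) if char(K) ≠ 2 then the Gauss map γ_ℓ on ℓ is separable, exactly two points of ℓ(K̄) are parabolic, and ℓ contains at most two Eckardt points; (ii) if char(K) = 2 and γ_ℓ is separable then exactly one point of ℓ(K̄) is parabolic and ℓ contains at most one Eckardt point; (iii) if char(K) = 2 and γ_ℓ is inseparable then every point of ℓ(K̄) is parabolic and ℓ contains exactly 5 Eckardt points. -/

import Mathlib

/- Common framework: points, lines, intersection divisors, the secant-tangent span,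
the groups `H_S(K)`, geometric notions over the algebraic closure, and topologies. -/

open MvPolynomial

noncomputable section

namespace CubicSurf

variable {K L : Type*} [Field K] [Field L] {n : ℕ}

/-- The set of `K`-rational points of the projective hypersurface `F = 0`. -/
def zeroSet (F : MvPolynomial (Fin n) K) : Set (Projectivization K (Fin n → K)) :=
  {P | eval P.rep F = 0}

/-- The binary form obtained by restricting `F` to the line spanned by `u` and `v`,
via the parametrization `(s : t) ↦ s • u + t • v`. -/
def lineRestrict (F : MvPolynomial (Fin n) K) (u v : Fin n → K) : MvPolynomial (Fin 2) K :=
  aeval (fun i => C (u i) * X 0 + C (v i) * X 1) F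

/-- A projective line: a 2-dimensional linear subspace of `K^n`. -/
def IsLine (W : Submodule K (Fin n → K)) : Prop := Module.finrank K W = 2

/-- The line `W` lies (geometrically) on the hypersurface `F = 0`. -/
def LineOnSurf (F : MvPolynomial (Fin n) K) (W : Submodule K (Fin n → K)) : Prop :=
  ∀ u v : Fin n → K, u ∈ W → v ∈ W → lineRestrict F u v = 0

/-- The projective point `P` lies on the line `W`. -/
def OnLine (W : Submodule K (Fin n → K)) (P : Projectivization K (Fin n → K)) : Prop :=
  P.rep ∈ W

/-- The set of `K`-points of the line `W`. -/
def linePts (W : Submodule K (Fin n → K)) : Set (Projectivization K (Fin n → K)) :=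
  {P | OnLine W P}

/-- `ℓ · S = P + Q + R`: the intersection divisor (with multiplicities) of the line `W`
with the hypersurface `F = 0` is `P + Q + R`. -/
def MeetsIn (F : MvPolynomial (Fin n) K) (W : Submodule K (Fin n → K))
    (P Q R : Projectivization K (Fin n → K)) : Prop :=
  ∃ (u v : Fin n → K) (_ : u ∈ W) (_ : v ∈ W) (_ : LinearIndependent K ![u, v])
    (c : K) (l m : Fin 3 → K) (h : ∀ k, l k • u + m k • v ≠ 0),
      c ≠ 0 ∧
      lineRestrict F u v = C c * ∏ k : Fin 3, (C (m k) * X 0 - C (l k) * X 1) ∧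
      Projectivization.mk K _ (h 0) = P ∧
      Projectivization.mk K _ (h 1) = Q ∧
      Projectivization.mk K _ (h 2) = R

/-- Membership in the span of a set of points under the secant/tangent process:
the smallest subset of `S(K)` containing `B` such that whenever `P`, `Q` are in it and a
`K`-line `ℓ ⊄ S` satisfies `ℓ·S = P+Q+R` with `R ∈ S(K)`, then `R` is in it. -/
inductive SpanMem (F : MvPolynomial (Fin n) K) (B : Set (Projectivization K (Fin n → K))) :
    Projectivization K (Fin n → K) → Prop
  | base (P : Projectivization K (Fin n → K)) (hP : P ∈ B) : SpanMem F B P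
  | secant (P Q R : Projectivization K (Fin n → K)) (W : Submodule K (Fin n → K))
      (hW : IsLine W) (hWS : ¬ LineOnSurf F W) (hP : SpanMem F B P) (hQ : SpanMem F B Q)
      (hR : R ∈ zeroSet F) (hm : MeetsIn F W P Q R) : SpanMem F B R

/-- The span of a set of points under the secant/tangent process. -/
def Span (F : MvPolynomial (Fin n) K) (B : Set (Projectivization K (Fin n → K))) :
    Set (Projectivization K (Fin n → K)) :=
  {P | SpanMem F B P}

/-- Smoothness of the projective hypersurface `F = 0`: over the algebraic closure there is
no nonzero common zero of `F` and all of its partial derivatives. -/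
def IsSmoothHypersurf (F : MvPolynomial (Fin n) K) : Prop :=
  ∀ v : Fin n → AlgebraicClosure K,
    eval v (MvPolynomial.map (algebraMap K (AlgebraicClosure K)) F) = 0 →
    (∀ i, eval v (pderiv i (MvPolynomial.map (algebraMap K (AlgebraicClosure K)) F)) = 0) →
    v = 0

/-- A smooth cubic hypersurface. -/
def SmoothCubic (F : MvPolynomial (Fin n) K) : Prop :=
  F.IsHomogeneous 3 ∧ IsSmoothHypersurf F

/-- The linear form cutting out the tangent plane `Π_P` of `F = 0` at `P`,
evaluated at the representative of a point `Q`; `Q ∈ Π_P` iff this vanishes. -/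
def tangentEval (F : MvPolynomial (Fin n) K) (P Q : Projectivization K (Fin n → K)) : K :=
  ∑ i, eval P.rep (pderiv i F) * Q.rep i

/-- The set of `K`-points of the tangent plane `Π_P`. -/
def tangentPlanePts (F : MvPolynomial (Fin n) K) (P : Projectivization K (Fin n → K)) :
    Set (Projectivization K (Fin n → K)) :=
  {Q | tangentEval F P Q = 0}

/-- The set of `K`-points of `Γ_P = S ∩ Π_P`. -/
def GammaPts (F : MvPolynomial (Fin n) K) (P : Projectivization K (Fin n → K)) :
    Set (Projectivization K (Fin n → K)) :=
  zeroSet F ∩ tangentPlanePts F P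

/-! ### Base change along a field embedding -/

/-- Base change of a vector along a field embedding. -/
def clVec (φ : K →+* L) (v : Fin n → K) : Fin n → L := fun i => φ (v i)

lemma clVec_ne_zero (φ : K →+* L) {v : Fin n → K} (hv : v ≠ 0) : clVec φ v ≠ 0 := by
  intro h
  apply hv
  funext i
  have := congrFun h i
  simpa [clVec] using φ.injective (by simpa [clVec] using this)

/-- Base change of a projective point along a field embedding. -/
def clPt (φ : K →+* L) (P : Projectivization K (Fin n → K)) :
    Projectivization L (Fin n → L) :=
  Projectivization.mk L (clVec φ P.rep) (clVec_ne_zero φ P.rep_nonzero)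

lemma eval_smul_of_isHomogeneous {R : Type*} [CommSemiring R] {F : MvPolynomial (Fin n) R}
    {d : ℕ} (hF : F.IsHomogeneous d) (a : R) (w : Fin n → R) :
    eval (a • w) F = a ^ d * eval w F := by
  classical
  rw [eval_eq', eval_eq', Finset.mul_sum]
  refine Finset.sum_congr rfl fun s hs => ?_
  have hdeg : ∑ i, s i = d := by
    have h1 := hF (MvPolynomial.mem_support_iff.mp hs)
    rw [Finsupp.weight_apply] at h1
    rw [← h1, Finsupp.sum_fintype]
    · simp
    · intro i; simp
  have key : ∀ i : Fin n, (a • w) i ^ s i = a ^ s i * w i ^ s i := by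
    intro i; simp [mul_pow]
  rw [Finset.prod_congr rfl (fun i _ => key i), Finset.prod_mul_distrib,
    Finset.prod_pow_eq_pow_sum, hdeg]
  ring

lemma clVec_eval (φ : K →+* L) (F : MvPolynomial (Fin n) K) (v : Fin n → K) :
    eval (clVec φ v) (MvPolynomial.map φ F) = φ (eval v F) := by
  rw [eval_map]
  have h : φ (eval v F) = φ (eval₂Hom (RingHom.id K) v F) := rfl
  rw [h, map_eval₂Hom]
  rfl

/-- A point given by a vector on which a homogeneous `F` vanishes lies in the zero set. -/
lemma mk_mem_zeroSet {F : MvPolynomial (Fin n) K} {d : ℕ} (hF : F.IsHomogeneous d)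
    {v : Fin n → K} (hv : v ≠ 0) (h : eval v F = 0) :
    Projectivization.mk K v hv ∈ zeroSet F := by
  obtain ⟨a, ha⟩ := Projectivization.exists_smul_eq_mk_rep K v hv
  show eval (Projectivization.mk K v hv).rep F = 0
  have hrep : (Projectivization.mk K v hv).rep = (a : K) • v := by
    rw [← ha, Units.smul_def]
  rw [hrep, eval_smul_of_isHomogeneous hF, h, mul_zero]

lemma clPt_mem_zeroSet (φ : K →+* L) {F : MvPolynomial (Fin n) K} {d : ℕ}
    (hF : F.IsHomogeneous d) {P : Projectivization K (Fin n → K)} (hP : P ∈ zeroSet F) :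
    clPt φ P ∈ zeroSet (MvPolynomial.map φ F) := by
  apply mk_mem_zeroSet (hF.map φ)
  rw [clVec_eval, hP, map_zero]

/-- The induced map on points of `S` under base change of the field. -/
def ptMap (φ : K →+* L) {F : MvPolynomial (Fin n) K} {d : ℕ} (hF : F.IsHomogeneous d)
    (P : zeroSet F) : zeroSet (MvPolynomial.map φ F) :=
  ⟨clPt φ P.1, clPt_mem_zeroSet φ hF P.2⟩

/-- A subspace of `L^n` is defined over `K` (w.r.t. `φ : K →+* L`) if it is spanned by
the base change of a `K`-subspace. -/
def DefinedOver (φ : K →+* L) (W : Submodule L (Fin n → L)) : Prop :=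
  ∃ W₀ : Submodule K (Fin n → K), W = Submodule.span L (clVec φ '' (W₀ : Set (Fin n → K)))

/-! ### Asymptotic lines, parabolic points, Eckardt points -/

/-- The line `W` is asymptotic to `F = 0` at `P`: the intersection multiplicity
`(ℓ · S)_P` is at least 3. -/
def AsymptoticAt (F : MvPolynomial (Fin n) K) (W : Submodule K (Fin n → K))
    (P : Projectivization K (Fin n → K)) : Prop :=
  IsLine W ∧ P.rep ∈ W ∧
    ∃ v ∈ W, LinearIndependent K ![P.rep, v] ∧
      ∃ c : K, lineRestrict F P.rep v = C c * (X 1) ^ 3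

/-- The set of asymptotic lines at `P`. -/
def AsymSet (F : MvPolynomial (Fin n) K) (P : Projectivization K (Fin n → K)) :
    Set (Submodule K (Fin n → K)) :=
  {W | AsymptoticAt F W P}

/-- A point of a hypersurface is parabolic (relative to the given field) if it does
not have exactly two distinct asymptotic lines (i.e. it has one or infinitely many). -/
def ParabolicAt (F : MvPolynomial (Fin n) K) (P : Projectivization K (Fin n → K)) : Prop :=
  ¬ ∃ W₁ W₂ : Submodule K (Fin n → K), W₁ ≠ W₂ ∧ AsymSet F P = {W₁, W₂}

/-- An Eckardt point (relative to the given field): three distinct lines lying on the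
surface pass through `P`. -/
def EckardtAt (F : MvPolynomial (Fin n) K) (P : Projectivization K (Fin n → K)) : Prop :=
  ∃ W₁ W₂ W₃ : Submodule K (Fin n → K), W₁ ≠ W₂ ∧ W₁ ≠ W₃ ∧ W₂ ≠ W₃ ∧
    (∀ W ∈ ({W₁, W₂, W₃} : Set (Submodule K (Fin n → K))),
      IsLine W ∧ LineOnSurf F W ∧ OnLine W P)

section geometric

variable (F : MvPolynomial (Fin n) K)

/-- `F` base changed to the algebraic closure of `K`. -/
def clF : MvPolynomial (Fin n) (AlgebraicClosure K) :=
  MvPolynomial.map (algebraMap K (AlgebraicClosure K)) F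

/-- A `K`-point of `S` is parabolic (a geometric notion, checked over `K̄`). -/
def IsParabolic (P : Projectivization K (Fin n → K)) : Prop :=
  ParabolicAt (clF F) (clPt (algebraMap K (AlgebraicClosure K)) P)

/-- A `K`-point of `S` is an Eckardt point (a geometric notion, checked over `K̄`). -/
def IsEckardt (P : Projectivization K (Fin n → K)) : Prop :=
  EckardtAt (clF F) (clPt (algebraMap K (AlgebraicClosure K)) P)

/-- A `K`-point of `S` is `K`-hyperbolic: it has exactly two asymptotic lines over `K̄`,
and both are defined over `K`. -/
def IsHyperbolic (P : Projectivization K (Fin n → K)) : Prop :=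
  ∃ W₁ W₂, W₁ ≠ W₂ ∧
    AsymSet (clF F) (clPt (algebraMap K (AlgebraicClosure K)) P) = {W₁, W₂} ∧
    DefinedOver (algebraMap K (AlgebraicClosure K)) W₁ ∧
    DefinedOver (algebraMap K (AlgebraicClosure K)) W₂

/-- A `K`-point of `S` is `K`-ternary: at least one of the asymptotic lines of `S`
through `P` is defined over `K`. -/
def IsTernary (P : Projectivization K (Fin n → K)) : Prop :=
  ∃ W ∈ AsymSet (clF F) (clPt (algebraMap K (AlgebraicClosure K)) P),
    DefinedOver (algebraMap K (AlgebraicClosure K)) W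

end geometric

/-! ### The group `H_S(K)` -/

variable (F : MvPolynomial (Fin n) K)

/-- `G_S(K)`: the free abelian group on the set `S(K)`. -/
abbrev GS := FreeAbelianGroup (zeroSet F)

/-- The degree homomorphism `G_S(K) → ℤ`, `Σ aᵢ Pᵢ ↦ Σ aᵢ`. -/
def degHom : GS F →+ ℤ := FreeAbelianGroup.lift fun _ => (1 : ℤ)

/-- `P + Q + R` is a "three point sum": either cut out on `S` with multiplicity by a
`K`-line not contained in `S`, or `P`, `Q`, `R` all lie on a `K`-line contained in `S`. -/
def TripleRel (P Q R : zeroSet F) : Prop :=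
  ∃ W : Submodule K (Fin n → K), IsLine W ∧
    ((¬ LineOnSurf F W ∧ MeetsIn F W P.1 Q.1 R.1) ∨
      (LineOnSurf F W ∧ OnLine W P.1 ∧ OnLine W Q.1 ∧ OnLine W R.1))

/-- `G'_S(K)`: the subgroup generated by all three point sums. -/
def Gp : AddSubgroup (GS F) :=
  AddSubgroup.closure {x | ∃ P Q R : zeroSet F, TripleRel F P Q R ∧
    x = FreeAbelianGroup.of P + FreeAbelianGroup.of Q + FreeAbelianGroup.of R}

/-- `G''_S(K)`: the degree-0 part of `G'_S(K)`. -/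
def Gpp : AddSubgroup (GS F) := Gp F ⊓ (degHom F).ker

/-- `H_S(K) = G_S(K)/G''_S(K)`. -/
abbrev HS := GS F ⧸ Gpp F

/-- The class `[P] ∈ H_S(K)` of a point `P ∈ S(K)`. -/
def HClass (P : zeroSet F) : HS F := QuotientAddGroup.mk' (Gpp F) (FreeAbelianGroup.of P)

/-- The degree homomorphism `H_S(K) → ℤ`. -/
def HdegHom : HS F →+ ℤ :=
  QuotientAddGroup.lift (Gpp F) (degHom F) (fun _ hx => hx.2)

/-- `H⁰_S(K)`: the degree-0 part of `H_S(K)`. -/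
def H0 : AddSubgroup (HS F) := (HdegHom F).ker

@[simp] lemma HdegHom_HClass (P : zeroSet F) : HdegHom F (HClass F P) = 1 := by
  simp [HdegHom, HClass, degHom]

/-- The class `[P] - [Q]`, as an element of `H⁰_S(K)`. -/
def H0diff (P Q : zeroSet F) : H0 F :=
  ⟨HClass F P - HClass F Q, by simp [H0, AddMonoidHom.mem_ker, map_sub]⟩

/-! ### mod-`p` dimensions and torsion -/

/-- `A/pA` for an abelian group `A`. -/
abbrev ModP (p : ℕ) (A : Type*) [AddCommGroup A] : Type _ :=
  A ⧸ (AddMonoidHom.range (nsmulAddMonoidHom p : A →+ A))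

instance ModP.instModule (p : ℕ) (A : Type*) [AddCommGroup A] : Module (ZMod p) (ModP p A) :=
  QuotientAddGroup.zmodModule (fun x => ⟨x, rfl⟩)

/-- `dim_{F_p} A/pA`. -/
def dimModP (p : ℕ) (A : Type*) [AddCommGroup A] : Cardinal := Module.rank (ZMod p) (ModP p A)

/-- The `k`-torsion subgroup `A[k]` of an abelian group `A`. -/
def torsion (k : ℕ) (A : Type*) [AddCommGroup A] : AddSubgroup A :=
  (nsmulAddMonoidHom k : A →+ A).ker

instance torsion.instModule (k : ℕ) (A : Type*) [AddCommGroup A] :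
    Module (ZMod k) (torsion k A) :=
  AddCommGroup.zmodModule (fun x => Subtype.ext x.2)

/-- `dim_{F_k} A[k]`: the dimension of the `k`-torsion subgroup (for `k` prime). -/
def dimTorsion (k : ℕ) (A : Type*) [AddCommGroup A] : Cardinal :=
  Module.rank (ZMod k) (torsion k A)

/-! ### Topologies -/

/-- The quotient topology on projective space induced by the topology of `K`. -/
def projTop (K : Type*) [Field K] [TopologicalSpace K] (n : ℕ) :
    TopologicalSpace (Projectivization K (Fin n → K)) :=
  TopologicalSpace.coinduced
    (fun v : {v : Fin n → K // v ≠ 0} => Projectivization.mk K v.1 v.2) inferInstance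

/-- The induced topology on the set of `K`-points of `S`. -/
def surfTop (F : MvPolynomial (Fin n) K) [TopologicalSpace K] :
    TopologicalSpace (zeroSet F) :=
  TopologicalSpace.induced Subtype.val (projTop K n)

/-- `K` (a topological field) is a local field: it is isomorphic, as a topological field,
to `ℝ`, to `ℂ`, or to a finite extension of `ℚ_p` for some prime `p` (with its canonical
topology, namely the `ℚ_p`-vector space topology). -/
def IsLocalField (K : Type*) [Field K] [TopologicalSpace K] : Prop :=
  (∃ e : K ≃+* ℝ, IsHomeomorph e) ∨ (∃ e : K ≃+* ℂ, IsHomeomorph e) ∨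
    (∃ (p : ℕ), p.Prime ∧ ∃ (_ : Fact p.Prime) (f : ℚ_[p] →+* K) (m : ℕ)
      (e : K ≃+ (Fin m → ℚ_[p])),
      (∀ (c : ℚ_[p]) (x : K), e (f c * x) = c • e x) ∧ IsHomeomorph e)

end CubicSurf

namespace CubicSurf

open MvPolynomial

variable {K : Type*} [Field K]

/-- The binary quadratic `q_a(s,t) = ∇F(s u + t v) · a` describing the Gauss map of
the line spanned by `u`, `v` in the direction `a`. -/
def gaussQuad (F : MvPolynomial (Fin 4) K) (u v a : Fin 4 → K) : MvPolynomial (Fin 2) K :=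
  ∑ i, C (a i) * lineRestrict (pderiv i F) u v

/-- The Gauss map `γ_ℓ : ℓ → ℙ¹` of a line `ℓ ⊆ S` (sending a point to its tangent plane
in the pencil of planes through `ℓ`) is separable: in coordinates, `γ_ℓ = (q_a : q_b)`
for binary quadratics `q_a`, `q_b`, and the map is separable iff the "Wronskian"
`q_a ∂q_b - q_b ∂q_a` is nonzero for one of the two partial derivatives. -/
def GaussSeparable (F : MvPolynomial (Fin 4) K) (W : Submodule K (Fin 4 → K)) : Prop :=
  ∃ u v a b : Fin 4 → K, u ∈ W ∧ v ∈ W ∧ LinearIndependent K ![u, v, a, b] ∧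
    (gaussQuad F u v a * pderiv 0 (gaussQuad F u v b) ≠
        gaussQuad F u v b * pderiv 0 (gaussQuad F u v a) ∨
      gaussQuad F u v a * pderiv 1 (gaussQuad F u v b) ≠
        gaussQuad F u v b * pderiv 1 (gaussQuad F u v a))

/-- The base change of a `K`-subspace of `K⁴` to the algebraic closure. -/
def clLine (W : Submodule K (Fin 4 → K)) :
    Submodule (AlgebraicClosure K) (Fin 4 → AlgebraicClosure K) :=
  Submodule.span (AlgebraicClosure K)
    (clVec (algebraMap K (AlgebraicClosure K)) '' (W : Set (Fin 4 → K)))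

end CubicSurf

/-!
Let the line pass through `x` and `x'`, and let `d` complete `x`, `x'` to a basis of the tangent
plane at `x`. The asymptotic lines at `x` other than the given one are spanned by `x` and
`s • x' + d`, where `s` solves the linear equation `s * hess G x x' d + grad G d x = 0`. Hence `x`
is parabolic exactly when `hess G x x' d = 0`, and otherwise the second line is rational.

As `x` moves along the line, `hess G x x' d` is, up to a nonzero factor, the value at `x` of a
binary quadratic form: the Wronskian of the two quadratic forms defining the Gauss map, divided by a
coordinate. Where it vanishes, smoothness forces `grad G x' d ≠ 0`. In characteristic other than
two, twice this number is, up to the same factor, the derivative of the quadratic form towards `x'`,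
so there are two simple zeros. In characteristic two the form is the square of a linear form, so it
has one zero unless it vanishes identically. In that last case `x` is an Eckardt point exactly when
`grad G d x = 0`; this is a binary quintic in `x` with derivative `grad G d x'` towards `x'`, and
smoothness makes its five zeros simple. Eckardt points are parabolic.
-/

namespace CubicSurf

section Homogeneous

variable {σ R : Type*} [CommSemiring R]

theorem homogeneousSubmodule_eq_span_prod_X (d : ℕ) :
    homogeneousSubmodule σ R d =
      Submodule.span R (Set.range fun s : Fin d → σ => ∏ i, (X (s i) : MvPolynomial σ R)) := by
  rw [← homogeneousSubmodule_one_pow, homogeneousSubmodule_one_eq_span_X, Submodule.span_pow]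
  congr 1
  ext p
  simp only [Set.mem_pow, Set.mem_range, List.prod_ofFn]
  constructor
  · rintro ⟨f, rfl⟩
    choose s hs using fun i => (f i).2
    exact ⟨s, by simp only [hs]⟩
  · rintro ⟨s, rfl⟩
    exact ⟨fun i => ⟨X (s i), s i, rfl⟩, rfl⟩

@[elab_as_elim]
theorem homogeneous_induction {d : ℕ} {motive : MvPolynomial σ R → Prop}
    (prod_X : ∀ s : Fin d → σ, motive (∏ i, X (s i))) (zero : motive 0)
    (add : ∀ p q, motive p → motive q → motive (p + q))
    (C_mul : ∀ c p, motive p → motive (C c * p))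
    {p : MvPolynomial σ R} (hp : p.IsHomogeneous d) : motive p := by
  rw [← mem_homogeneousSubmodule, homogeneousSubmodule_eq_span_prod_X] at hp
  induction hp using Submodule.span_induction with
  | mem p hp => obtain ⟨s, rfl⟩ := hp; exact prod_X s
  | zero => exact zero
  | add p q _ _ hp hq => exact add p q hp hq
  | smul c p _ hp => rw [smul_eq_C_mul]; exact C_mul c p hp

end Homogeneous

section Gradient

variable {σ R : Type*} [Fintype σ] [CommRing R]

/-- The differential of `F` at `x`, as a linear form; for a point `x` of the hypersurface
`F = 0` at which it does not vanish, its kernel is the tangent space. -/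
def grad (F : MvPolynomial σ R) (x : σ → R) : (σ → R) →ₗ[R] R :=
  ∑ i, eval x (pderiv i F) • LinearMap.proj i

theorem grad_apply (F : MvPolynomial σ R) (x v : σ → R) :
    grad F x v = ∑ i, eval x (pderiv i F) * v i := by
  simp [grad]

@[simp]
theorem grad_zero (x : σ → R) : grad (0 : MvPolynomial σ R) x = 0 := by
  simp [grad]

@[simp]
theorem grad_add (F G : MvPolynomial σ R) (x : σ → R) :
    grad (F + G) x = grad F x + grad G x := by
  simp [grad, add_smul, Finset.sum_add_distrib]

@[simp]
theorem grad_sub (F G : MvPolynomial σ R) (x : σ → R) :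
    grad (F - G) x = grad F x - grad G x := by
  ext v
  simp [grad, sub_mul, Finset.sum_sub_distrib]

@[simp]
theorem grad_mul (F G : MvPolynomial σ R) (x : σ → R) :
    grad (F * G) x = eval x F • grad G x + eval x G • grad F x := by
  simp [grad, add_smul, Finset.sum_add_distrib, Finset.smul_sum, smul_smul]

@[simp]
theorem grad_C (c : R) (x : σ → R) : grad (C c : MvPolynomial σ R) x = 0 := by
  simp [grad]

@[simp]
theorem grad_X (i : σ) (x : σ → R) : grad (X i : MvPolynomial σ R) x = LinearMap.proj i := by
  classical
  simp [grad, pderiv_X, Pi.single_apply, apply_ite]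

theorem grad_single [DecidableEq σ] (F : MvPolynomial σ R) (x : σ → R) (i : σ) :
    grad F x (Pi.single i 1) = eval x (pderiv i F) := by
  simp [grad_apply, Pi.single_apply]

theorem grad_eq_zero_iff (F : MvPolynomial σ R) (x : σ → R) :
    grad F x = 0 ↔ ∀ i, eval x (pderiv i F) = 0 := by
  classical
  refine ⟨fun h i => by rw [← grad_single, h, LinearMap.zero_apply], fun h => ?_⟩
  simp [grad, h]

theorem grad_self {F : MvPolynomial σ R} {d : ℕ} (hF : F.IsHomogeneous d) (x : σ → R) :
    grad F x x = d * eval x F := by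
  have euler := congrArg (eval x) hF.sum_X_mul_pderiv
  simpa [grad_apply, mul_comm] using euler

/-- The polarization of the quadratic map `x ↦ grad F x` of a cubic form `F`, so that
`hess F x y z` is the symmetric trilinear form whose value at `(x, x, x)` is `6 F(x)`. -/
def hess (F : MvPolynomial σ R) (x y : σ → R) : (σ → R) →ₗ[R] R :=
  grad F (x + y) - grad F x - grad F y

theorem hess_apply (F : MvPolynomial σ R) (x y z : σ → R) :
    hess F x y z = grad F (x + y) z - grad F x z - grad F y z := rfl

theorem hess_comm (F : MvPolynomial σ R) (x y : σ → R) : hess F x y = hess F y x := by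
  rw [hess, hess, add_comm x y, sub_right_comm]

theorem hess_swap {G : MvPolynomial σ R} (hG : G.IsHomogeneous 3) (x y z : σ → R) :
    hess G x y z = hess G z y x := by
  refine homogeneous_induction (fun s => ?_) ?_ (fun p q hp hq => ?_) (fun c p hp => ?_) hG
  · simp only [Fin.prod_univ_three, hess_apply, grad_mul, map_mul, eval_X, Pi.add_apply, grad_X,
      smul_add, LinearMap.add_apply, LinearMap.smul_apply, LinearMap.proj_apply, smul_eq_mul]
    ring
  · simp [hess_apply]
  · simp only [hess_apply, grad_add, LinearMap.add_apply] at *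
    linear_combination hp + hq
  · simp only [hess_apply, grad_mul, eval_C, grad_C, smul_zero, add_zero, LinearMap.smul_apply,
      smul_eq_mul] at hp ⊢
    linear_combination c * hp

theorem hess_rotate {G : MvPolynomial σ R} (hG : G.IsHomogeneous 3) (x y z : σ → R) :
    hess G x y z = hess G y z x := by
  rw [hess_comm, hess_swap hG, hess_comm, hess_swap hG]

theorem grad_smul_add_smul {G : MvPolynomial σ R} (hG : G.IsHomogeneous 3) (s t : R)
    (x y z : σ → R) :
    grad G (s • x + t • y) z =
      s ^ 2 * grad G x z + s * t * hess G x y z + t ^ 2 * grad G y z := by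
  refine homogeneous_induction (fun i => ?_) ?_ (fun p q hp hq => ?_) (fun c p hp => ?_) hG
  · simp only [Fin.prod_univ_three, hess_apply, grad_mul, map_mul, eval_X, Pi.add_apply,
      Pi.smul_apply, grad_X, smul_add, LinearMap.add_apply, LinearMap.smul_apply,
      LinearMap.proj_apply, smul_eq_mul]
    ring
  · simp [hess_apply]
  · simp only [hess_apply, grad_add, LinearMap.add_apply] at *
    linear_combination hp + hq
  · simp only [hess_apply, grad_mul, eval_C, grad_C, smul_zero, add_zero, LinearMap.smul_apply,
      smul_eq_mul] at hp ⊢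
    linear_combination c * hp

theorem eval_smul_add_smul {G : MvPolynomial σ R} (hG : G.IsHomogeneous 3) (s t : R)
    (x y : σ → R) :
    eval (s • x + t • y) G =
      s ^ 3 * eval x G + s ^ 2 * t * grad G x y + s * t ^ 2 * grad G y x + t ^ 3 * eval y G := by
  refine homogeneous_induction (fun i => ?_) ?_ (fun p q hp hq => ?_) (fun c p hp => ?_) hG
  · simp only [Fin.prod_univ_three, map_mul, eval_X, Pi.add_apply, Pi.smul_apply, grad_mul, grad_X,
      smul_add, LinearMap.add_apply, LinearMap.smul_apply, LinearMap.proj_apply, smul_eq_mul]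
    ring
  · simp
  · simp only [map_add, grad_add, LinearMap.add_apply]
    linear_combination hp + hq
  · simp only [map_mul, eval_C, grad_mul, grad_C, smul_zero, add_zero, LinearMap.smul_apply,
      smul_eq_mul]
    linear_combination c * hp

theorem grad_smul {G : MvPolynomial σ R} (hG : G.IsHomogeneous 3) (c : R) (x z : σ → R) :
    grad G (c • x) z = c ^ 2 * grad G x z := by
  simpa using grad_smul_add_smul hG c 0 x 0 z

theorem hess_smul_add_smul {G : MvPolynomial σ R} (hG : G.IsHomogeneous 3) (s t : R)
    (x y z w : σ → R) :
    hess G (s • x + t • y) z w = s * hess G x z w + t * hess G y z w := by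
  rw [hess_swap hG, map_add, map_smul, map_smul, hess_swap hG w, hess_swap hG w,
    smul_eq_mul, smul_eq_mul]

theorem hess_self {G : MvPolynomial σ R} (hG : G.IsHomogeneous 3) (x z : σ → R) :
    hess G x x z = 2 * grad G x z := by
  have double := grad_smul_add_smul hG 2 0 x 0 z
  simp only [two_smul, smul_zero, add_zero] at double
  rw [hess_apply, double]
  ring

end Gradient

section BaseChange

variable {K L : Type*} [Field K] [Field L] {n : ℕ} (φ : K →+* L) (F : MvPolynomial (Fin n) K)

theorem grad_map (x v : Fin n → K) :
    grad (map φ F) (clVec φ x) (clVec φ v) = φ (grad F x v) := by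
  simp only [grad_apply, pderiv_map, clVec_eval, map_sum, map_mul, clVec]

theorem clVec_add (x y : Fin n → K) : clVec φ (x + y) = clVec φ x + clVec φ y :=
  funext fun i => map_add φ (x i) (y i)

theorem clVec_smul (c : K) (x : Fin n → K) : clVec φ (c • x) = φ c • clVec φ x :=
  funext fun i => map_mul φ c (x i)

theorem hess_map (x y z : Fin n → K) :
    hess (map φ F) (clVec φ x) (clVec φ y) (clVec φ z) = φ (hess F x y z) := by
  simp only [hess_apply, ← clVec_add, grad_map, map_sub]

theorem grad_map_eq_zero_iff {x : Fin n → K} :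
    grad (map φ F) (clVec φ x) = 0 ↔ grad F x = 0 := by
  simp only [grad_eq_zero_iff, pderiv_map, clVec_eval, map_eq_zero]

theorem lineRestrict_map (u v : Fin n → K) :
    lineRestrict (map φ F) (clVec φ u) (clVec φ v) = map φ (lineRestrict F u v) := by
  simp only [lineRestrict, aeval_eq_bind₁, map_bind₁, map_add, map_mul, map_C, map_X, clVec]

theorem linearIndependent_clVec {ι : Type*} {v : ι → Fin n → K} (hv : LinearIndependent K v) :
    LinearIndependent L (fun i => clVec φ (v i)) := by
  algebraize [φ]
  exact linearIndependent_algebraMap_comp_iff.2 hv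

end BaseChange

section LineRestrict

variable {K : Type*} [Field K] {n : ℕ}

theorem lineRestrict_quadratic {H : MvPolynomial (Fin n) K} (hH : H.IsHomogeneous 2)
    (u v : Fin n → K) :
    lineRestrict H u v = C (eval u H) * X 0 ^ 2 +
      C (eval (u + v) H - eval u H - eval v H) * (X 0 * X 1) + C (eval v H) * X 1 ^ 2 := by
  simp only [lineRestrict]
  refine homogeneous_induction (fun i => ?_) ?_ (fun p q hp hq => ?_) (fun c p hp => ?_) hH
  · simp only [Fin.prod_univ_two, map_mul, aeval_X, eval_X, Pi.add_apply, map_sub, map_add]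
    ring
  · simp
  · simp only [map_sub, map_add] at hp hq ⊢
    linear_combination hp + hq
  · simp only [map_sub, map_mul, algHom_C, algebraMap_eq, eval_C] at hp ⊢
    linear_combination C c * hp

theorem lineRestrict_cubic {G : MvPolynomial (Fin n) K} (hG : G.IsHomogeneous 3)
    (u v : Fin n → K) :
    lineRestrict G u v = C (eval u G) * X 0 ^ 3 + C (grad G u v) * (X 0 ^ 2 * X 1) +
      C (grad G v u) * (X 0 * X 1 ^ 2) + C (eval v G) * X 1 ^ 3 := by
  simp only [lineRestrict]
  refine homogeneous_induction (fun i => ?_) ?_ (fun p q hp hq => ?_) (fun c p hp => ?_) hG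
  · simp only [Fin.prod_univ_three, map_mul, map_add, aeval_X, eval_X, grad_mul, grad_X, smul_add,
      LinearMap.add_apply, LinearMap.smul_apply, LinearMap.proj_apply, smul_eq_mul]
    ring
  · simp
  · simp only [map_add, grad_add, LinearMap.add_apply] at hp hq ⊢
    linear_combination hp + hq
  · simp only [map_mul, algHom_C, algebraMap_eq, eval_C, grad_mul, grad_C, smul_zero, add_zero,
      LinearMap.smul_apply, smul_eq_mul] at hp ⊢
    linear_combination C c * hp

theorem binaryCubic_eq_zero_iff {R : Type*} [CommRing R] {a b c d : R} :
    (C a * X 0 ^ 3 + C b * (X 0 ^ 2 * X 1) + C c * (X 0 * X 1 ^ 2) + C d * X 1 ^ 3 :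
      MvPolynomial (Fin 2) R) = 0 ↔ a = 0 ∧ b = 0 ∧ c = 0 ∧ d = 0 := by
  refine ⟨fun h => ?_, fun ⟨ha, hb, hc, hd⟩ => by simp [ha, hb, hc, hd]⟩
  have key := congrArg (aeval ![1, (Polynomial.X : Polynomial R)]) h
  simp only [map_add, map_mul, map_pow, algHom_C, Polynomial.algebraMap_eq, aeval_X,
    Matrix.cons_val_zero, Matrix.cons_val_one, one_pow, mul_one, one_mul, map_zero] at key
  refine ⟨?_, ?_, ?_, ?_⟩
  · simpa [Polynomial.coeff_X, Polynomial.coeff_X_pow] using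
      congrArg (Polynomial.coeff · 0) key
  · simpa [Polynomial.coeff_X, Polynomial.coeff_X_pow, Polynomial.coeff_C] using
      congrArg (Polynomial.coeff · 1) key
  · simpa [Polynomial.coeff_X, Polynomial.coeff_X_pow, Polynomial.coeff_C] using
      congrArg (Polynomial.coeff · 2) key
  · simpa [Polynomial.coeff_X, Polynomial.coeff_X_pow, Polynomial.coeff_C] using
      congrArg (Polynomial.coeff · 3) key

theorem lineRestrict_eq_zero_iff {G : MvPolynomial (Fin n) K} (hG : G.IsHomogeneous 3)
    {u v : Fin n → K} :
    lineRestrict G u v = 0 ↔ eval u G = 0 ∧ grad G u v = 0 ∧ grad G v u = 0 ∧ eval v G = 0 := by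
  rw [lineRestrict_cubic hG, binaryCubic_eq_zero_iff]

theorem exists_lineRestrict_eq_C_mul_iff {G : MvPolynomial (Fin n) K} (hG : G.IsHomogeneous 3)
    {u v : Fin n → K} :
    (∃ c, lineRestrict G u v = C c * X 1 ^ 3) ↔
      eval u G = 0 ∧ grad G u v = 0 ∧ grad G v u = 0 := by
  rw [lineRestrict_cubic hG]
  refine ⟨fun ⟨c, hc⟩ => ?_, fun ⟨h₀, h₁, h₂⟩ => ⟨eval v G, by simp [h₀, h₁, h₂]⟩⟩
  have key := (binaryCubic_eq_zero_iff (a := eval u G) (b := grad G u v) (c := grad G v u)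
    (d := eval v G - c)).1 (by rw [map_sub]; linear_combination hc)
  exact ⟨key.1, key.2.1, key.2.2.1⟩

theorem lineRestrict_smul_add_smul (F : MvPolynomial (Fin n) K) (u v : Fin n → K)
    (p q r s : K) :
    lineRestrict F (p • u + q • v) (r • u + s • v) =
      aeval ![C p * X 0 + C r * X 1, C q * X 0 + C s * X 1] (lineRestrict F u v) := by
  have comp := AlgHom.congr_fun (comp_aeval (R := K) (fun i => C (u i) * X 0 + C (v i) * X 1)
    (aeval (R := K) ![C p * X 0 + C r * X 1, C q * X 0 + C s * X (1 : Fin 2)])) F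
  refine Eq.trans ?_ comp.symm
  rw [lineRestrict]
  congr 2
  ext1 i
  simp only [Pi.add_apply, Pi.smul_apply, smul_eq_mul, map_add, map_mul, algHom_C, algebraMap_eq,
    aeval_X, Matrix.cons_val_zero, Matrix.cons_val_one]
  ring

theorem lineOnSurf_span_pair {F : MvPolynomial (Fin n) K} {u v : Fin n → K}
    (h : lineRestrict F u v = 0) : LineOnSurf F (Submodule.span K {u, v}) := by
  intro x y hx hy
  obtain ⟨p, q, rfl⟩ := Submodule.mem_span_pair.1 hx
  obtain ⟨r, s, rfl⟩ := Submodule.mem_span_pair.1 hy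
  rw [lineRestrict_smul_add_smul, h, map_zero]

theorem IsLine.eq_span_pair {W : Submodule K (Fin n → K)} (hW : IsLine W) {u v : Fin n → K}
    (hu : u ∈ W) (hv : v ∈ W) (huv : LinearIndependent K ![u, v]) :
    W = Submodule.span K {u, v} := by
  refine (Submodule.eq_of_le_of_finrank_eq (Submodule.span_le.2 (Set.pair_subset hu hv)) ?_).symm
  rw [hW, ← Matrix.range_cons_cons_empty, finrank_span_eq_card huv, Fintype.card_fin]

theorem isLine_span_pair {u v : Fin n → K} (huv : LinearIndependent K ![u, v]) :
    IsLine (Submodule.span K {u, v}) := by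
  rw [IsLine, ← Matrix.range_cons_cons_empty, finrank_span_eq_card huv, Fintype.card_fin]

end LineRestrict

section Asymptotic

variable {K : Type*} [Field K] {n : ℕ}

theorem exists_rep_mk_eq_smul {x : Fin n → K} (hx : x ≠ 0) :
    ∃ c ≠ (0 : K), (Projectivization.mk K x hx).rep = c • x := by
  obtain ⟨c, hc⟩ := Projectivization.exists_smul_eq_mk_rep K x hx
  exact ⟨c, c.ne_zero, hc.symm⟩

theorem onLine_mk_iff {W : Submodule K (Fin n → K)} {x : Fin n → K} (hx : x ≠ 0) :
    OnLine W (Projectivization.mk K x hx) ↔ x ∈ W := by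
  obtain ⟨c, hc, rep_eq⟩ := exists_rep_mk_eq_smul hx
  rw [OnLine, rep_eq, W.smul_mem_iff hc]

theorem mem_asymSet_mk_iff {G : MvPolynomial (Fin n) K} (hG : G.IsHomogeneous 3)
    {x : Fin n → K} (hx : x ≠ 0) {W : Submodule K (Fin n → K)} :
    W ∈ AsymSet G (Projectivization.mk K x hx) ↔
      ∃ v, LinearIndependent K ![x, v] ∧ W = Submodule.span K {x, v} ∧
        eval x G = 0 ∧ grad G x v = 0 ∧ grad G v x = 0 := by
  obtain ⟨c, hc, rep_eq⟩ := exists_rep_mk_eq_smul hx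
  have linearIndependent_rep_iff (v : Fin n → K) :
      LinearIndependent K ![c • x, v] ↔ LinearIndependent K ![x, v] := by
    simpa using LinearIndependent.pair_smul_smul_iff (x := x) (y := v) (IsUnit.mk0 c hc) isUnit_one
  simp only [AsymSet, Set.mem_ofPred_eq, AsymptoticAt, rep_eq, linearIndependent_rep_iff,
    W.smul_mem_iff hc, exists_lineRestrict_eq_C_mul_iff hG, eval_smul_of_isHomogeneous hG,
    grad_smul hG, map_smul, smul_eq_mul, mul_eq_zero, pow_eq_zero_iff three_ne_zero,
    pow_eq_zero_iff two_ne_zero, hc, false_or]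
  constructor
  · rintro ⟨hW, hxW, v, hvW, hxv, asymptotic⟩
    exact ⟨v, hxv, hW.eq_span_pair hxW hvW hxv, asymptotic⟩
  · rintro ⟨v, hxv, rfl, asymptotic⟩
    exact ⟨isLine_span_pair hxv, Submodule.subset_span (Set.mem_insert x {v}), v,
      Submodule.subset_span (Set.mem_insert_of_mem x rfl), hxv, asymptotic⟩

theorem IsLine.exists_linearIndependent {W : Submodule K (Fin n → K)} (hW : IsLine W)
    {x : Fin n → K} (hxW : x ∈ W) (hx : x ≠ 0) : ∃ y ∈ W, LinearIndependent K ![x, y] := by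
  have x_ne_zero : (⟨x, hxW⟩ : W) ≠ 0 := fun h => hx (congrArg Subtype.val h)
  obtain ⟨y, hxy⟩ := exists_linearIndependent_pair_of_one_lt_finrank
    (by rw [hW]; exact one_lt_two) x_ne_zero
  refine ⟨y, y.2, ?_⟩
  simpa [LinearIndependent.pair_iff, Subtype.ext_iff] using hxy

theorem mem_asymSet_of_lineOnSurf {F : MvPolynomial (Fin n) K} {W : Submodule K (Fin n → K)}
    {P : Projectivization K (Fin n → K)} (hW : IsLine W) (hWF : LineOnSurf F W)
    (hPW : OnLine W P) : W ∈ AsymSet F P := by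
  obtain ⟨v, hv, hPv⟩ := hW.exists_linearIndependent hPW P.rep_nonzero
  exact ⟨hW, hPW, v, hv, hPv, 0, by rw [hWF _ _ hPW hv, C_0, zero_mul]⟩

theorem EckardtAt.not_asymSet_subset_pair {F : MvPolynomial (Fin n) K}
    {P : Projectivization K (Fin n → K)} (hP : EckardtAt F P)
    (V₁ V₂ : Submodule K (Fin n → K)) : ¬ AsymSet F P ⊆ {V₁, V₂} := by
  obtain ⟨W₁, W₂, W₃, h₁₂, h₁₃, h₂₃, lines⟩ := hP
  intro subset
  have mem_pair : ∀ W ∈ ({W₁, W₂, W₃} : Set _), W = V₁ ∨ W = V₂ := fun W hW =>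
    subset (mem_asymSet_of_lineOnSurf (lines W hW).1 (lines W hW).2.1 (lines W hW).2.2)
  simp only [Set.mem_insert_iff, Set.mem_singleton_iff, forall_eq_or_imp, forall_eq] at mem_pair
  grind

theorem EckardtAt.parabolicAt {F : MvPolynomial (Fin n) K}
    {P : Projectivization K (Fin n → K)} (hP : EckardtAt F P) : ParabolicAt F P :=
  fun ⟨V₁, V₂, _, h⟩ => hP.not_asymSet_subset_pair V₁ V₂ h.subset

end Asymptotic

section LinearIndependentTriple

variable {K V : Type*} [Field K] [AddCommGroup V] [Module K V] {x y z : V}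

theorem eq_zero_of_linearIndependent_triple (h : LinearIndependent K ![x, y, z]) {r s t : K}
    (hrst : r • x + s • y + t • z = 0) : r = 0 ∧ s = 0 ∧ t = 0 := by
  have key := Fintype.linearIndependent_iff.1 h ![r, s, t]
    (by simpa [Fin.sum_univ_three] using hrst)
  exact ⟨key 0, key 1, key 2⟩

theorem linearIndependent_pair_of_triple (h : LinearIndependent K ![x, y, z]) :
    LinearIndependent K ![x, y] :=
  LinearIndependent.pair_iff.2 fun r s hrs =>
    have key := eq_zero_of_linearIndependent_triple (t := 0) h (by simpa using hrs)
    ⟨key.1, key.2.1⟩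

theorem linearIndependent_pair_smul_add (h : LinearIndependent K ![x, y, z]) (s : K) :
    LinearIndependent K ![x, s • y + z] :=
  LinearIndependent.pair_iff.2 fun r t hrt =>
    have key := eq_zero_of_linearIndependent_triple (r := r) (s := t * s) (t := t) h
      (by rw [← hrt]; module)
    ⟨key.1, key.2.2⟩

theorem span_pair_ne_span_smul_add (h : LinearIndependent K ![x, y, z]) (s : K) :
    Submodule.span K {x, y} ≠ Submodule.span K {x, s • y + z} := by
  intro heq
  have mem : s • y + z ∈ Submodule.span K {x, y} := heq ▸ Submodule.subset_span (by simp)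
  obtain ⟨p, q, hpq⟩ := Submodule.mem_span_pair.1 mem
  have key := eq_zero_of_linearIndependent_triple (r := p) (s := q - s) (t := -1) h
    (by linear_combination (norm := module) (1 : K) • hpq)
  exact neg_ne_zero.2 one_ne_zero key.2.2

theorem span_smul_add_injective (h : LinearIndependent K ![x, y, z]) :
    Function.Injective fun s : K => Submodule.span K {x, s • y + z} := by
  intro s s' heq
  have mem : s • y + z ∈ Submodule.span K {x, s' • y + z} :=
    (show _ = Submodule.span K {x, s' • y + z} from heq) ▸ Submodule.subset_span (by simp)
  obtain ⟨p, q, hpq⟩ := Submodule.mem_span_pair.1 mem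
  have key := eq_zero_of_linearIndependent_triple (r := p) (s := q * s' - s) (t := q - 1) h
    (by linear_combination (norm := module) (1 : K) • hpq)
  linear_combination s' * key.2.2 - key.2.1

end LinearIndependentTriple

section TangentFrame

variable {K : Type*} [Field K]

/-- `TangentFrame G x x' d`: the point `x` and the vectors `x'`, `d` span the tangent plane at `x`
of the cubic surface `G = 0`, on which the line through `x` and `x'` lies.  The asymptotic lines
at `x` are then governed by the two scalars `hess G x x' d` and `grad G d x`. -/
structure TangentFrame (G : MvPolynomial (Fin 4) K) (x x' d : Fin 4 → K) : Prop where
  isHomogeneous : G.IsHomogeneous 3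
  linearIndependent : LinearIndependent K ![x, x', d]
  lineRestrict_eq_zero : lineRestrict G x x' = 0
  grad_ne_zero : grad G x ≠ 0
  grad_apply_eq_zero : grad G x d = 0

variable {G : MvPolynomial (Fin 4) K} {x x' d : Fin 4 → K}

theorem finrank_ker_grad (hx : grad G x ≠ 0) :
    Module.finrank K (LinearMap.ker (grad G x)) = 3 := by
  have := Module.Dual.finrank_ker_add_one_of_ne_zero (f := grad G x) hx
  rw [Module.finrank_fin_fun] at this
  omega

theorem exists_tangentFrame (hG : G.IsHomogeneous 3) (hxx' : LinearIndependent K ![x, x'])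
    (hline : lineRestrict G x x' = 0) (hx : grad G x ≠ 0) : ∃ d, TangentFrame G x x' d := by
  obtain ⟨eval_x, grad_x_x', -, -⟩ := (lineRestrict_eq_zero_iff hG).1 hline
  have grad_x_x : grad G x x = 0 := by rw [grad_self hG, eval_x, mul_zero]
  let pair : Fin 2 → LinearMap.ker (grad G x) := ![⟨x, grad_x_x⟩, ⟨x', grad_x_x'⟩]
  have hpair : LinearIndependent K pair := by
    simpa [pair, LinearIndependent.pair_iff, Subtype.ext_iff] using hxx'
  have two_lt : 2 < Module.finrank K (LinearMap.ker (grad G x)) := by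
    rw [finrank_ker_grad hx]; exact Nat.lt_succ_self 2
  obtain ⟨d, hd⟩ := exists_linearIndependent_snoc_of_lt_finrank hpair two_lt
  have triple_eq : ![x, x', d] = Submodule.subtype _ ∘ Fin.snoc pair d := by
    ext1 i
    fin_cases i <;> rfl
  exact ⟨d, hG, triple_eq ▸ hd.map' _ (Submodule.ker_subtype _), hline, hx, d.2⟩

namespace TangentFrame

theorem map (h : TangentFrame G x x' d) {L : Type*} [Field L] (φ : K →+* L) :
    TangentFrame (MvPolynomial.map φ G) (clVec φ x) (clVec φ x') (clVec φ d) := by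
  refine ⟨h.isHomogeneous.map φ, ?_, ?_, ?_, ?_⟩
  · convert linearIndependent_clVec φ h.linearIndependent using 1
    ext1 i
    fin_cases i <;> rfl
  · rw [lineRestrict_map, h.lineRestrict_eq_zero, map_zero]
  · exact (grad_map_eq_zero_iff φ G).not.2 h.grad_ne_zero
  · rw [grad_map, h.grad_apply_eq_zero, map_zero]

theorem ne_zero (h : TangentFrame G x x' d) : x ≠ 0 := h.linearIndependent.ne_zero 0

theorem eval_eq_zero (h : TangentFrame G x x' d) : eval x G = 0 :=
  ((lineRestrict_eq_zero_iff h.isHomogeneous).1 h.lineRestrict_eq_zero).1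

theorem grad_apply_right (h : TangentFrame G x x' d) : grad G x x' = 0 :=
  ((lineRestrict_eq_zero_iff h.isHomogeneous).1 h.lineRestrict_eq_zero).2.1

theorem grad_right_apply (h : TangentFrame G x x' d) : grad G x' x = 0 :=
  ((lineRestrict_eq_zero_iff h.isHomogeneous).1 h.lineRestrict_eq_zero).2.2.1

theorem grad_apply_self (h : TangentFrame G x x' d) : grad G x x = 0 := by
  rw [grad_self h.isHomogeneous, h.eval_eq_zero, mul_zero]

theorem ker_grad (h : TangentFrame G x x' d) :
    LinearMap.ker (grad G x) = Submodule.span K {x, x', d} := by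
  symm
  refine Submodule.eq_of_le_of_finrank_eq (Submodule.span_le.2 ?_) ?_
  · simp [Set.insert_subset_iff, h.grad_apply_self, h.grad_apply_right, h.grad_apply_eq_zero]
  · have := finrank_span_eq_card h.linearIndependent
    rw [Fintype.card_fin, Matrix.range_cons, Matrix.range_cons_cons_empty,
      Set.singleton_union] at this
    rw [finrank_ker_grad h.grad_ne_zero, this]

theorem grad_combination_apply (h : TangentFrame G x x' d) (r s t : K) :
    grad G (r • x + (s • x' + t • d)) x = t * (s * hess G x x' d + t * grad G d x) := by
  have hG := h.isHomogeneous
  have tangent : hess G x (s • x' + t • d) x = 0 := by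
    rw [hess_comm, hess_swap hG, hess_self hG, map_add, map_smul, map_smul, h.grad_apply_right,
      h.grad_apply_eq_zero, smul_zero, smul_zero, add_zero, mul_zero]
  have one := grad_smul_add_smul hG r 1 x (s • x' + t • d) x
  rw [one_smul] at one
  rw [one, tangent, h.grad_apply_self, grad_smul_add_smul hG, h.grad_right_apply,
    ← hess_rotate hG]
  ring

theorem mem_asymSet_iff (h : TangentFrame G x x' d) {W : Submodule K (Fin 4 → K)} :
    W ∈ AsymSet G (Projectivization.mk K x h.ne_zero) ↔ W = Submodule.span K {x, x'} ∨
      ∃ s, s * hess G x x' d + grad G d x = 0 ∧ W = Submodule.span K {x, s • x' + d} := by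
  have hxx' := linearIndependent_pair_of_triple h.linearIndependent
  rw [mem_asymSet_mk_iff h.isHomogeneous]
  constructor
  · rintro ⟨v, hxv, rfl, -, grad_x_v, grad_v_x⟩
    have mem : v ∈ Submodule.span K {x, x', d} := h.ker_grad ▸ grad_x_v
    obtain ⟨r, s, t, rfl⟩ : ∃ r s t : K, v = r • x + (s • x' + t • d) := by
      simpa [Submodule.mem_span_insert, Submodule.mem_span_singleton] using mem
    have line := isLine_span_pair hxv
    have x_mem : x ∈ Submodule.span K {x, r • x + (s • x' + t • d)} :=
      Submodule.subset_span (by simp)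
    rw [h.grad_combination_apply, mul_eq_zero] at grad_v_x
    obtain rfl | ht := eq_or_ne t 0
    · have hs : s ≠ 0 := by
        rintro rfl
        have := (LinearIndependent.pair_iff.1 hxv (-r) 1 (by module)).2
        exact one_ne_zero this
      refine .inl (line.eq_span_pair x_mem (Submodule.mem_span_pair.2 ⟨-(r / s), s⁻¹, ?_⟩) hxx')
      match_scalars <;> field_simp <;> ring
    · refine .inr ⟨s / t, ?_, line.eq_span_pair x_mem (Submodule.mem_span_pair.2
        ⟨-(r / t), t⁻¹, ?_⟩) (linearIndependent_pair_smul_add h.linearIndependent _)⟩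
      · have := grad_v_x.resolve_left ht
        field_simp
        linear_combination this
      · match_scalars <;> field_simp
        ring
  · rintro (rfl | ⟨s, hs, rfl⟩)
    · exact ⟨x', hxx', rfl, h.eval_eq_zero, h.grad_apply_right, h.grad_right_apply⟩
    · refine ⟨_, linearIndependent_pair_smul_add h.linearIndependent s, rfl, h.eval_eq_zero, ?_, ?_⟩
      · rw [map_add, map_smul, h.grad_apply_right, h.grad_apply_eq_zero, smul_zero, add_zero]
      · have key := h.grad_combination_apply 0 s 1
        rwa [zero_smul, zero_add, one_smul, one_mul, one_mul, hs] at key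

theorem asymSet_eq_pair (h : TangentFrame G x x' d) (hess_ne : hess G x x' d ≠ 0) :
    AsymSet G (Projectivization.mk K x h.ne_zero) = {Submodule.span K {x, x'},
      Submodule.span K {x, -(grad G d x / hess G x x' d) • x' + d}} := by
  ext W
  have root_iff (s : K) : s * hess G x x' d + grad G d x = 0 ↔
      s = -(grad G d x / hess G x x' d) := by
    field_simp
    grind
  simp only [h.mem_asymSet_iff, root_iff, exists_eq_left, Set.mem_insert_iff,
    Set.mem_singleton_iff]

theorem asymSet_eq_singleton (h : TangentFrame G x x' d) (hess_eq : hess G x x' d = 0)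
    (grad_ne : grad G d x ≠ 0) :
    AsymSet G (Projectivization.mk K x h.ne_zero) = {Submodule.span K {x, x'}} := by
  ext W
  simp [h.mem_asymSet_iff, hess_eq, grad_ne]

theorem parabolicAt_iff (h : TangentFrame G x x' d) :
    ParabolicAt G (Projectivization.mk K x h.ne_zero) ↔ hess G x x' d = 0 := by
  refine ⟨fun hpar => ?_, ?_⟩
  · by_contra hess_ne
    exact hpar ⟨_, _, span_pair_ne_span_smul_add h.linearIndependent _,
      h.asymSet_eq_pair hess_ne⟩
  · rintro hess_eq ⟨V₁, V₂, hV, asymSet_eq⟩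
    by_cases hd : grad G d x = 0
    · have mem_left : Submodule.span K {x, x'} = V₁ ∨ Submodule.span K {x, x'} = V₂ :=
        asymSet_eq.subset (h.mem_asymSet_iff.2 (.inl rfl))
      have mem (s : K) :
          Submodule.span K {x, s • x' + d} = V₁ ∨ Submodule.span K {x, s • x' + d} = V₂ :=
        asymSet_eq.subset (h.mem_asymSet_iff.2 (.inr ⟨s, by simp [hess_eq, hd], rfl⟩))
      have ne_left := span_pair_ne_span_smul_add h.linearIndependent
      have ne := (span_smul_add_injective h.linearIndependent).ne (zero_ne_one (α := K))
      grind [mem 0, mem 1, ne_left 0, ne_left 1]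
    · rw [h.asymSet_eq_singleton hess_eq hd] at asymSet_eq
      have mem : V₁ ∈ ({V₁, V₂} : Set _) ∧ V₂ ∈ ({V₁, V₂} : Set _) := by simp
      rw [← asymSet_eq] at mem
      exact hV (mem.1.trans mem.2.symm)

theorem grad_eq_zero_of_eckardtAt (h : TangentFrame G x x' d)
    (heck : EckardtAt G (Projectivization.mk K x h.ne_zero)) : grad G d x = 0 := by
  by_contra hd
  have subset := h.asymSet_eq_singleton (h.parabolicAt_iff.1 heck.parabolicAt) hd
  rw [← Set.pair_eq_singleton] at subset
  exact heck.not_asymSet_subset_pair _ _ subset.subset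

theorem eckardtAt_of_eval_eq_zero (h : TangentFrame G x x' d) (hess_eq : hess G x x' d = 0)
    (grad_eq : grad G d x = 0) {s s' : K} (hss' : s ≠ s') (hs : eval (s • x' + d) G = 0)
    (hs' : eval (s' • x' + d) G = 0) : EckardtAt G (Projectivization.mk K x h.ne_zero) := by
  have line {y : Fin 4 → K} (hxy : LinearIndependent K ![x, y]) (hy : lineRestrict G x y = 0) :
      IsLine (Submodule.span K {x, y}) ∧ LineOnSurf G (Submodule.span K {x, y}) ∧
        OnLine (Submodule.span K {x, y}) (Projectivization.mk K x h.ne_zero) :=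
    ⟨isLine_span_pair hxy, lineOnSurf_span_pair hy,
      (onLine_mk_iff h.ne_zero).2 (Submodule.subset_span (by simp))⟩
  have residual {r : K} (hr : eval (r • x' + d) G = 0) : lineRestrict G x (r • x' + d) = 0 := by
    have key := h.grad_combination_apply 0 r 1
    rw [zero_smul, zero_add, one_smul, hess_eq, grad_eq, mul_zero, mul_zero, add_zero,
      mul_zero] at key
    refine (lineRestrict_eq_zero_iff h.isHomogeneous).2 ⟨h.eval_eq_zero, ?_, key, hr⟩
    rw [map_add, map_smul, h.grad_apply_right, h.grad_apply_eq_zero, smul_zero, add_zero]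
  have residual_independent := linearIndependent_pair_smul_add h.linearIndependent
  refine ⟨_, _, _, span_pair_ne_span_smul_add h.linearIndependent s,
    span_pair_ne_span_smul_add h.linearIndependent s',
    (span_smul_add_injective h.linearIndependent).ne hss', ?_⟩
  rintro W (rfl | rfl | rfl)
  · exact line (linearIndependent_pair_of_triple h.linearIndependent) h.lineRestrict_eq_zero
  · exact line (residual_independent s) (residual hs)
  · exact line (residual_independent s') (residual hs')

end TangentFrame
end TangentFrame

section AffineRestrict

variable {σ R : Type*} [CommRing R]

/-- The restriction of `f` to the affine line `t ↦ t • e + e'`. -/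
def affineRestrict (f : MvPolynomial σ R) (e e' : σ → R) : Polynomial R :=
  aeval (fun i => Polynomial.C (e i) * Polynomial.X + Polynomial.C (e' i)) f

theorem eval_affineRestrict (f : MvPolynomial σ R) (e e' : σ → R) (r : R) :
    (affineRestrict f e e').eval r = eval (r • e + e') f := by
  induction f using MvPolynomial.induction_on with
  | C a => simp [affineRestrict]
  | add p q hp hq => simp_all [affineRestrict]
  | mul_X p i hp =>
    simp only [affineRestrict, map_mul, aeval_X, Polynomial.eval_mul, Polynomial.eval_add,
      Polynomial.eval_C, Polynomial.eval_X, eval_X, Pi.add_apply, Pi.smul_apply,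
      smul_eq_mul] at hp ⊢
    rw [hp]
    ring

theorem eval_derivative_affineRestrict [Fintype σ] (f : MvPolynomial σ R) (e e' : σ → R) (r : R) :
    (affineRestrict f e e').derivative.eval r = grad f (r • e + e') e := by
  induction f using MvPolynomial.induction_on with
  | C a => simp [affineRestrict]
  | add p q hp hq => simp_all [affineRestrict]
  | mul_X p i hp =>
    have := eval_affineRestrict p e e' r
    simp only [affineRestrict, map_mul, aeval_X, Polynomial.derivative_mul,
      Polynomial.derivative_add, Polynomial.derivative_C, zero_mul, Polynomial.derivative_X,
      mul_one, zero_add, add_zero, Polynomial.eval_add, Polynomial.eval_mul, Polynomial.eval_C,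
      Polynomial.eval_X, grad_mul, grad_X, eval_X, Pi.add_apply, Pi.smul_apply, LinearMap.add_apply,
      LinearMap.smul_apply, LinearMap.proj_apply, smul_eq_mul] at this hp ⊢
    rw [this, hp]
    ring

theorem natDegree_affineRestrict_le {f : MvPolynomial σ R} {n : ℕ} (hf : f.IsHomogeneous n)
    (e e' : σ → R) : (affineRestrict f e e').natDegree ≤ n := by
  refine homogeneous_induction (fun s => ?_) ?_ (fun p q hp hq => ?_) (fun c p hp => ?_) hf
  · simp only [affineRestrict, map_prod, aeval_X]
    refine (Polynomial.natDegree_prod_le _ _).trans ?_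
    simpa using Finset.sum_le_card_nsmul Finset.univ _ 1
      fun i _ => Polynomial.natDegree_linear_le (a := e (s i)) (b := e' (s i))
  · simp [affineRestrict]
  · simpa only [affineRestrict, map_add] using Polynomial.natDegree_add_le_of_degree_le hp hq
  · simpa only [affineRestrict, map_mul, algHom_C, Polynomial.algebraMap_eq] using
      (Polynomial.natDegree_C_mul_le c (affineRestrict p e e')).trans hp

theorem coeff_affineRestrict {f : MvPolynomial σ R} {n : ℕ} (hf : f.IsHomogeneous n)
    (e e' : σ → R) : (affineRestrict f e e').coeff n = eval e f := by
  refine homogeneous_induction (fun s => ?_) ?_ (fun p q hp hq => ?_) (fun c p hp => ?_) hf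
  · simpa [affineRestrict] using Polynomial.coeff_prod_of_natDegree_le Finset.univ _ 1
      fun i _ => Polynomial.natDegree_linear_le (a := e (s i)) (b := e' (s i))
  · simp [affineRestrict]
  · simp_all [affineRestrict]
  · simp_all [affineRestrict]

end AffineRestrict

section BinaryForm

/-- The hypersurface `F = 0` has no singular point with coordinates in `R`. -/
def Nonsingular {σ R : Type*} [Fintype σ] [CommRing R] (F : MvPolynomial σ R) : Prop :=
  ∀ v : σ → R, eval v F = 0 → grad F v = 0 → v = 0

theorem Nonsingular.ne_zero {σ R : Type*} [Fintype σ] [Nonempty σ] [CommRing R] [Nontrivial R]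
    {F : MvPolynomial σ R} (hF : Nonsingular F) : F ≠ 0 := by
  rintro rfl
  exact one_ne_zero (hF 1 (map_zero _) (grad_zero _))

variable {L : Type*} [Field L]

theorem mk_mem_zeroSet_iff {n d : ℕ} {F : MvPolynomial (Fin n) L} (hF : F.IsHomogeneous d)
    {x : Fin n → L} (hx : x ≠ 0) : Projectivization.mk L x hx ∈ zeroSet F ↔ eval x F = 0 := by
  refine ⟨fun h => ?_, mk_mem_zeroSet hF hx⟩
  obtain ⟨c, hc, rep_eq⟩ := exists_rep_mk_eq_smul hx
  rw [zeroSet, Set.mem_ofPred_eq, rep_eq, eval_smul_of_isHomogeneous hF] at h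
  exact (mul_eq_zero.1 h).resolve_left (pow_ne_zero d hc)

theorem span_pair_eq_top {e e' : Fin 2 → L} (he : LinearIndependent L ![e, e']) :
    Submodule.span L {e, e'} = ⊤ := by
  rw [← Matrix.range_cons_cons_empty]
  exact he.span_eq_top_of_card_eq_finrank (by simp)

theorem exists_eval_ne_zero_linearIndependent [Infinite L] {f : MvPolynomial (Fin 2) L}
    (hf : f ≠ 0) : ∃ e e' : Fin 2 → L, eval e f ≠ 0 ∧ LinearIndependent L ![e, e'] := by
  have mul_X_ne_zero : f * X 0 ≠ 0 := mul_ne_zero hf (X_ne_zero 0)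
  obtain ⟨e, he⟩ : ∃ e, eval e (f * X 0) ≠ 0 := by
    by_contra! h
    exact mul_X_ne_zero (MvPolynomial.funext fun e => by rw [h, map_zero])
  have e_ne_zero : e ≠ 0 := by
    rintro rfl
    simp at he
  obtain ⟨e', he'⟩ := exists_linearIndependent_pair_of_one_lt_finrank (R := L)
    (by rw [Module.finrank_fin_fun]; exact one_lt_two) e_ne_zero
  exact ⟨e, e', left_ne_zero_of_mul (by rwa [← map_mul]), he'⟩

theorem grad_eq_zero_of_apply_eq_zero {n : ℕ} {f : MvPolynomial (Fin 2) L}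
    (hf : f.IsHomogeneous n) {e x : Fin 2 → L} (hex : LinearIndependent L ![e, x])
    (hx : eval x f = 0) (hgrad : grad f x e = 0) : grad f x = 0 := by
  rw [← LinearMap.ker_eq_top, eq_top_iff, ← span_pair_eq_top hex, Submodule.span_le]
  exact Set.pair_subset hgrad
    (by rw [SetLike.mem_coe, LinearMap.mem_ker, grad_self hf, hx, mul_zero])

theorem linearIndependent_smul_add {V : Type*} [AddCommGroup V] [Module L V] {e e' : V}
    (he : LinearIndependent L ![e, e']) (r : L) : LinearIndependent L ![e, r • e + e'] :=
  LinearIndependent.pair_iff.2 fun p q hpq => by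
    obtain ⟨h, rfl⟩ := LinearIndependent.pair_iff.1 he (p + q * r) q (by rw [← hpq]; module)
    exact ⟨by simpa using h, rfl⟩

theorem nodup_roots_affineRestrict {n : ℕ} {f : MvPolynomial (Fin 2) L} (hf : f.IsHomogeneous n)
    (hns : Nonsingular f) {e e' : Fin 2 → L} (hee' : LinearIndependent L ![e, e']) :
    (affineRestrict f e e').roots.Nodup := by
  classical
  obtain hp | hp := eq_or_ne (affineRestrict f e e') 0
  · simp [hp]
  rw [Multiset.nodup_iff_count_le_one]
  intro r
  rw [Polynomial.count_roots, ← not_lt, Polynomial.one_lt_rootMultiplicity_iff_isRoot hp]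
  rintro ⟨root, derivative_root⟩
  rw [Polynomial.IsRoot, eval_affineRestrict] at root
  rw [Polynomial.IsRoot, eval_derivative_affineRestrict] at derivative_root
  have independent := linearIndependent_smul_add hee' r
  exact independent.ne_zero 1
    (hns _ root (grad_eq_zero_of_apply_eq_zero hf independent root derivative_root))

/-- The points `r • e + e'` of the projective line, that is, all but the one spanned by `e`. -/
def affinePoint {e e' : Fin 2 → L} (hee' : LinearIndependent L ![e, e']) (r : L) :
    Projectivization L (Fin 2 → L) :=
  Projectivization.mk L (r • e + e') ((linearIndependent_smul_add hee' r).ne_zero 1)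

theorem affinePoint_injective {e e' : Fin 2 → L} (hee' : LinearIndependent L ![e, e']) :
    Function.Injective (affinePoint hee') := by
  intro r r' h
  obtain ⟨c, hc⟩ := (Projectivization.mk_eq_mk_iff' L _ _ _ _).1 h
  obtain ⟨h₁, h₂⟩ := LinearIndependent.pair_iff.1 hee' (c * r' - r) (c - 1)
    (by linear_combination (norm := module) (1 : L) • hc)
  linear_combination r' * h₂ - h₁

theorem zeroSet_eq_image_affinePoint {n : ℕ} {f : MvPolynomial (Fin 2) L}
    (hf : f.IsHomogeneous n) {e e' : Fin 2 → L} (hee' : LinearIndependent L ![e, e'])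
    (he : eval e f ≠ 0) :
    zeroSet f = affinePoint hee' '' {r | eval (r • e + e') f = 0} := by
  ext P
  induction P using Projectivization.ind with | h x hx => ?_
  rw [mk_mem_zeroSet_iff hf]
  constructor
  · intro eval_x
    obtain ⟨s, t, rfl⟩ := Submodule.mem_span_pair.1
      (show x ∈ Submodule.span L {e, e'} from span_pair_eq_top hee' ▸ Submodule.mem_top)
    have ht : t ≠ 0 := by
      rintro rfl
      rw [zero_smul, add_zero] at eval_x hx
      rw [eval_smul_of_isHomogeneous hf] at eval_x
      exact mul_ne_zero (pow_ne_zero n (left_ne_zero_of_smul hx)) he eval_x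
    have rescale : (s / t) • e + e' = t⁻¹ • (s • e + t • e') := by
      match_scalars <;> field_simp
    refine ⟨s / t, ?_, (Projectivization.mk_eq_mk_iff' L _ _ _ _).2 ⟨t⁻¹, rescale.symm⟩⟩
    rw [Set.mem_ofPred_eq, rescale, eval_smul_of_isHomogeneous hf, eval_x, mul_zero]
  · rintro ⟨r, eval_r, h⟩
    rw [← mk_mem_zeroSet_iff hf hx, ← h]
    exact mk_mem_zeroSet hf _ eval_r

theorem ncard_zeroSet_of_nonsingular [IsAlgClosed L] {n : ℕ} {f : MvPolynomial (Fin 2) L}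
    (hf : f.IsHomogeneous n) (hns : Nonsingular f) : (zeroSet f).ncard = n := by
  classical
  have := IsAlgClosed.instInfinite (K := L)
  obtain ⟨e, e', eval_e, hee'⟩ := exists_eval_ne_zero_linearIndependent hns.ne_zero
  have coeff_ne_zero : (affineRestrict f e e').coeff n ≠ 0 := by rwa [coeff_affineRestrict hf]
  have ne_zero : affineRestrict f e e' ≠ 0 := fun h => coeff_ne_zero (by simp [h])
  have roots_eq : {r | eval (r • e + e') f = 0} =
      ((affineRestrict f e e').roots.toFinset : Set L) := by
    ext r
    simp [ne_zero, eval_affineRestrict]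
  rw [zeroSet_eq_image_affinePoint hf hee' eval_e,
    Set.ncard_image_of_injective _ (affinePoint_injective hee'), roots_eq, Set.ncard_coe_finset,
    Multiset.toFinset_card_of_nodup (nodup_roots_affineRestrict hf hns hee'),
    IsAlgClosed.card_roots_eq_natDegree,
    Polynomial.natDegree_eq_of_le_of_coeff_ne_zero (natDegree_affineRestrict_le hf e e')
      coeff_ne_zero]

end BinaryForm

section LinePoint

variable {K : Type*} [Field K] {n : ℕ} {u v : Fin n → K}

/-- The parametrization `(s : t) ↦ s • u + t • v` of the projective line spanned by `u` and `v`. -/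
def linePoint (huv : LinearIndependent K ![u, v]) :
    Projectivization K (Fin 2 → K) → Projectivization K (Fin n → K) :=
  Projectivization.map (Fintype.linearCombination K ![u, v])
    (linearIndependent_iff_injective_fintypeLinearCombination.1 huv)

theorem smul_add_smul_ne_zero (huv : LinearIndependent K ![u, v]) {p : Fin 2 → K} (hp : p ≠ 0) :
    p 0 • u + p 1 • v ≠ 0 := fun h => hp <| by
  obtain ⟨h₀, h₁⟩ := LinearIndependent.pair_iff.1 huv _ _ h
  ext i
  fin_cases i
  exacts [h₀, h₁]

theorem linePoint_mk (huv : LinearIndependent K ![u, v]) {p : Fin 2 → K} (hp : p ≠ 0) :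
    linePoint huv (Projectivization.mk K p hp) =
      Projectivization.mk K (p 0 • u + p 1 • v) (smul_add_smul_ne_zero huv hp) := by
  simp [linePoint, Projectivization.map_mk, Fintype.linearCombination_apply]

theorem range_linePoint (huv : LinearIndependent K ![u, v]) :
    Set.range (linePoint huv) = {P | OnLine (Submodule.span K {u, v}) P} := by
  ext P
  constructor
  · rintro ⟨p, rfl⟩
    induction p using Projectivization.ind with | h p hp => ?_
    rw [linePoint_mk, Set.mem_ofPred_eq, onLine_mk_iff]
    exact Submodule.mem_span_pair.2 ⟨_, _, rfl⟩
  · intro hP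
    obtain ⟨s, t, hst⟩ := Submodule.mem_span_pair.1 hP
    have hp : ![s, t] ≠ 0 := by
      intro h
      obtain ⟨rfl, rfl⟩ : s = 0 ∧ t = 0 := by simpa using h
      exact P.rep_nonzero (by rw [← hst, zero_smul, zero_smul, add_zero])
    refine ⟨Projectivization.mk K ![s, t] hp, ?_⟩
    rw [linePoint_mk, ← P.mk_rep]
    simp [hst]

theorem linePoint_injective (huv : LinearIndependent K ![u, v]) :
    Function.Injective (linePoint huv) :=
  Projectivization.map_injective _ _

theorem ncard_onLine_and (huv : LinearIndependent K ![u, v])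
    (Q : Projectivization K (Fin n → K) → Prop) :
    {P | OnLine (Submodule.span K {u, v}) P ∧ Q P}.ncard = {p | Q (linePoint huv p)}.ncard := by
  have image_eq : {P | OnLine (Submodule.span K {u, v}) P ∧ Q P} =
      linePoint huv '' (linePoint huv ⁻¹' {P | Q P}) := by
    rw [Set.image_preimage_eq_inter_range, range_linePoint, Set.inter_comm, Set.ofPred_and]
  rw [image_eq, Set.ncard_image_of_injective _ (linePoint_injective huv)]
  rfl

end LinePoint

section Ramification

variable {L : Type*} [Field L] {G : MvPolynomial (Fin 4) L} {x x' d : Fin 4 → L}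

theorem exists_quadratic_eq_zero [IsAlgClosed L] {a : L} (ha : a ≠ 0) (b c : L) :
    ∃ s, a * s ^ 2 + b * s + c = 0 := by
  obtain ⟨s, hs⟩ := IsAlgClosed.exists_root
    (Polynomial.C a * Polynomial.X ^ 2 + Polynomial.C b * Polynomial.X + Polynomial.C c)
    (by rw [Polynomial.degree_quadratic ha]; exact two_ne_zero)
  exact ⟨s, by simpa using hs⟩

namespace TangentFrame

theorem eq_zero_of_apply_eq_zero (h : TangentFrame G x x' d) {e : Fin 4 → L}
    (he : grad G x e ≠ 0) {f : (Fin 4 → L) →ₗ[L] L} (f_x : f x = 0) (f_x' : f x' = 0)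
    (f_d : f d = 0) (f_e : f e = 0) : f = 0 := by
  have ker_le : LinearMap.ker (grad G x) ≤ LinearMap.ker f := by
    rw [h.ker_grad, Submodule.span_le]
    rintro _ (rfl | rfl | rfl)
    exacts [f_x, f_x', f_d]
  refine LinearMap.ext fun z => ?_
  have key : f (z - (grad G x z / grad G x e) • e) = 0 :=
    ker_le (by rw [LinearMap.mem_ker, map_sub, map_smul, smul_eq_mul,
      div_mul_cancel₀ _ he, sub_self])
  rwa [map_sub, map_smul, f_e, smul_zero, sub_zero] at key

theorem exists_grad_apply_ne_zero (h : TangentFrame G x x' d) : ∃ e, grad G x e ≠ 0 := by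
  by_contra! hzero
  exact h.grad_ne_zero (LinearMap.ext hzero)

theorem eval_right_eq_zero (h : TangentFrame G x x' d) : eval x' G = 0 :=
  ((lineRestrict_eq_zero_iff h.isHomogeneous).1 h.lineRestrict_eq_zero).2.2.2

theorem eval_line_eq_zero (h : TangentFrame G x x' d) (s t : L) :
    eval (s • x + t • x') G = 0 := by
  rw [eval_smul_add_smul h.isHomogeneous, h.eval_eq_zero, h.grad_apply_right, h.grad_right_apply,
    h.eval_right_eq_zero]
  ring

theorem hess_apply_left (h : TangentFrame G x x' d) : hess G x x' x = 0 := by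
  rw [hess_comm, hess_swap h.isHomogeneous, hess_self h.isHomogeneous, h.grad_apply_right, mul_zero]

theorem hess_apply_right (h : TangentFrame G x x' d) : hess G x x' x' = 0 := by
  rw [hess_swap h.isHomogeneous, hess_self h.isHomogeneous, h.grad_right_apply, mul_zero]

theorem grad_right_apply_self (h : TangentFrame G x x' d) : grad G x' x' = 0 := by
  rw [grad_self h.isHomogeneous, h.eval_right_eq_zero, mul_zero]

-- Otherwise the tangent plane at `x` would be tangent along the whole line, and `G = 0` would be
-- singular where the line meets the quadric `grad G · e = 0` for a vector `e` off that plane.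
theorem grad_right_apply_ne_zero [IsAlgClosed L] (h : TangentFrame G x x' d)
    (hG : Nonsingular G) (hess_eq : hess G x x' d = 0) : grad G x' d ≠ 0 := by
  intro grad_eq
  obtain ⟨e, he⟩ := h.exists_grad_apply_ne_zero
  obtain ⟨s, hs⟩ := exists_quadratic_eq_zero he (hess G x x' e) (grad G x' e)
  have grad_line (z : Fin 4 → L) : grad G (s • x + (1 : L) • x') z =
      grad G x z * s ^ 2 + hess G x x' z * s + grad G x' z := by
    rw [grad_smul_add_smul h.isHomogeneous]
    ring
  have grad_eq_zero : grad G (s • x + (1 : L) • x') = 0 := by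
    refine h.eq_zero_of_apply_eq_zero he ?_ ?_ ?_ ((grad_line e).trans hs) <;> rw [grad_line]
    · rw [h.grad_apply_self, h.hess_apply_left, h.grad_right_apply]; ring
    · rw [h.grad_apply_right, h.hess_apply_right, h.grad_right_apply_self]; ring
    · rw [h.grad_apply_eq_zero, hess_eq, grad_eq]; ring
  have := hG _ (h.eval_line_eq_zero s 1) grad_eq_zero
  exact one_ne_zero (LinearIndependent.pair_iff.1
    (linearIndependent_pair_of_triple h.linearIndependent) s 1 this).2

section CharTwo

variable [CharP L 2]

-- Write `x, x', d, e` for a basis.  If the two values vanished, then `grad G (d + y)` would vanish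
-- on `x` and `x'` for every `y = r • x + s • x'`, and one can choose first `s`, then `r`, such that
-- it vanishes on `d` and `e` as well.
theorem grad_apply_line_ne_zero [IsAlgClosed L] (h : TangentFrame G x x' d) (hG : Nonsingular G)
    (hess_eq : hess G x x' = 0) (grad_x : grad G d x = 0) : grad G d x' ≠ 0 := by
  intro grad_x'
  have two : (2 : L) = 0 := CharTwo.two_eq_zero
  have hG₃ := h.isHomogeneous
  have right_ne := h.grad_right_apply_ne_zero hG (by rw [hess_eq, LinearMap.zero_apply])
  obtain ⟨e, he⟩ := h.exists_grad_apply_ne_zero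
  obtain ⟨s, hs⟩ := exists_quadratic_eq_zero right_ne 0 (grad G d d)
  obtain ⟨r, hr⟩ := exists_quadratic_eq_zero he (hess G d x e)
    (s ^ 2 * grad G x' e + s * hess G d x' e + grad G d e)
  have grad_sum (z : Fin 4 → L) : grad G ((1 : L) • d + (1 : L) • (r • x + s • x')) z =
      grad G d z + (r * hess G d x z + s * hess G d x' z) +
        (r ^ 2 * grad G x z + s ^ 2 * grad G x' z) := by
    rw [grad_smul_add_smul hG₃, grad_smul_add_smul hG₃, hess_comm, hess_smul_add_smul hG₃,
      hess_eq, hess_comm G x, hess_comm G x', LinearMap.zero_apply]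
    ring
  have hess_x_x' : hess G d x x' = 0 := by
    rw [hess_rotate hG₃, hess_eq, LinearMap.zero_apply]
  have hess_x'_x : hess G d x' x = 0 := by
    rw [hess_swap hG₃, hess_eq, LinearMap.zero_apply]
  have hess_double (y z : Fin 4 → L) : hess G y z z = 0 := by
    rw [hess_swap hG₃, hess_self hG₃, two, zero_mul]
  have hess_double' (y z : Fin 4 → L) : hess G y z y = 0 := by
    rw [hess_comm, hess_double]
  have grad_eq_zero : grad G ((1 : L) • d + (1 : L) • (r • x + s • x')) = 0 := by
    refine h.eq_zero_of_apply_eq_zero he ?_ ?_ ?_ ?_ <;> rw [grad_sum]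
    · rw [grad_x, hess_double, hess_x'_x, h.grad_apply_self, h.grad_right_apply]; ring
    · rw [grad_x', hess_double, hess_x_x', h.grad_apply_right, h.grad_right_apply_self]; ring
    · rw [hess_double', hess_double', h.grad_apply_eq_zero]
      linear_combination hs
    · linear_combination hr
  have eval_eq_zero : eval ((1 : L) • d + (1 : L) • (r • x + s • x')) G = 0 := by
    have euler := grad_self hG₃ ((1 : L) • d + (1 : L) • (r • x + s • x'))
    rw [grad_eq_zero, LinearMap.zero_apply] at euler
    push_cast at euler
    linear_combination -euler - eval ((1 : L) • d + (1 : L) • (r • x + s • x')) G * two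
  exact one_ne_zero (eq_zero_of_linearIndependent_triple (r := r) (s := s) (t := 1)
    h.linearIndependent (by rw [← hG _ eval_eq_zero grad_eq_zero]; module)).2.2

theorem eckardtAt_iff [IsAlgClosed L] (h : TangentFrame G x x' d) (hG : Nonsingular G)
    (hess_eq : hess G x x' = 0) :
    EckardtAt G (Projectivization.mk L x h.ne_zero) ↔ grad G d x = 0 := by
  refine ⟨h.grad_eq_zero_of_eckardtAt, fun grad_x => ?_⟩
  have hess_d : hess G x x' d = 0 := by rw [hess_eq, LinearMap.zero_apply]
  have right_ne := h.grad_right_apply_ne_zero hG hess_d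
  have grad_x' := h.grad_apply_line_ne_zero hG hess_eq grad_x
  have eval_residual (s : L) : eval (s • x' + d) G =
      grad G x' d * s ^ 2 + grad G d x' * s + eval d G := by
    have key := eval_smul_add_smul h.isHomogeneous s 1 x' d
    rw [one_smul, h.eval_right_eq_zero] at key
    linear_combination key
  obtain ⟨s, hs⟩ := exists_quadratic_eq_zero right_ne (grad G d x') (eval d G)
  refine h.eckardtAt_of_eval_eq_zero (s := s) (s' := s + grad G d x' / grad G x' d) hess_d grad_x
    (by simp [grad_x', right_ne]) ((eval_residual s).trans hs) ?_
  rw [eval_residual, ← hs]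
  field_simp
  linear_combination (grad G d x' ^ 2 + grad G x' d * grad G d x' * s) *
    (CharTwo.two_eq_zero : (2 : L) = 0)

end CharTwo
end TangentFrame
end Ramification

section GaussMap

variable {K : Type*} [Field K] {G : MvPolynomial (Fin 4) K}

theorem grad_binaryLinear (α β : K) (p q : Fin 2 → K) :
    grad (C α * X 0 + C β * X 1) p q = α * q 0 + β * q 1 := by
  simp only [grad_add, grad_mul, grad_C, grad_X, LinearMap.add_apply, LinearMap.smul_apply,
    LinearMap.zero_apply, LinearMap.proj_apply, smul_eq_mul, eval_C]
  ring

theorem isHomogeneous_binaryLinear (α β : K) :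
    (C α * X 0 + C β * X 1 : MvPolynomial (Fin 2) K).IsHomogeneous 1 :=
  ((isHomogeneous_X _ _).C_mul _).add ((isHomogeneous_X _ _).C_mul _)

theorem grad_binaryQuadratic (α β γ : K) (p q : Fin 2 → K) :
    grad (C α * X 0 ^ 2 + C β * (X 0 * X 1) + C γ * X 1 ^ 2) p q =
      2 * α * p 0 * q 0 + β * (p 0 * q 1 + p 1 * q 0) + 2 * γ * p 1 * q 1 := by
  simp only [grad_add, grad_mul, grad_C, grad_X, pow_two, LinearMap.add_apply,
    LinearMap.smul_apply, LinearMap.zero_apply, LinearMap.proj_apply, smul_eq_mul, map_mul,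
    eval_C, eval_X]
  ring

theorem isHomogeneous_binaryQuadratic (α β γ : K) :
    (C α * X 0 ^ 2 + C β * (X 0 * X 1) + C γ * X 1 ^ 2 :
      MvPolynomial (Fin 2) K).IsHomogeneous 2 :=
  ((isHomogeneous_C_mul_X_pow _ _ _).add
    (((isHomogeneous_X _ _).mul (isHomogeneous_X _ _)).C_mul _)).add
    (isHomogeneous_C_mul_X_pow _ _ _)

theorem gaussQuad_eq (hG : G.IsHomogeneous 3) (u v a : Fin 4 → K) :
    gaussQuad G u v a =
      C (grad G u a) * X 0 ^ 2 + C (hess G u v a) * (X 0 * X 1) + C (grad G v a) * X 1 ^ 2 := by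
  have quadratic (i : Fin 4) := lineRestrict_quadratic (hG.pderiv (i := i)) u v
  simp only [gaussQuad, quadratic, hess_apply, grad_apply, map_sum, map_sub, map_mul,
    Finset.sum_mul, ← Finset.sum_add_distrib, ← Finset.sum_sub_distrib]
  exact Finset.sum_congr rfl fun i _ => by ring

/-- The binary form of degree two whose zeros are the ramification points of the Gauss map
`(gaussQuad G u v a : gaussQuad G u v b)`: up to sign, the Wronskian determinant of the two forms
with respect to either variable, divided by the other variable. -/
def gaussWronskian (G : MvPolynomial (Fin 4) K) (u v a b : Fin 4 → K) : MvPolynomial (Fin 2) K :=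
  C (grad G u a * hess G u v b - hess G u v a * grad G u b) * X 0 ^ 2 +
    C (2 * (grad G u a * grad G v b - grad G v a * grad G u b)) * (X 0 * X 1) +
    C (hess G u v a * grad G v b - grad G v a * hess G u v b) * X 1 ^ 2

theorem gaussQuad_isHomogeneous (hG : G.IsHomogeneous 3) (u v a : Fin 4 → K) :
    (gaussQuad G u v a).IsHomogeneous 2 := by
  rw [gaussQuad_eq hG]
  exact isHomogeneous_binaryQuadratic _ _ _

theorem gaussQuad_wronskian_zero (hG : G.IsHomogeneous 3) (u v a b : Fin 4 → K) :
    gaussQuad G u v a * pderiv 0 (gaussQuad G u v b) -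
      gaussQuad G u v b * pderiv 0 (gaussQuad G u v a) = -X 1 * gaussWronskian G u v a b := by
  have C_two : (C 2 : MvPolynomial (Fin 2) K) = 2 := map_ofNat C 2
  simp only [gaussQuad_eq hG, gaussWronskian, map_add, map_sub, map_mul, C_two, Derivation.leibniz,
    Derivation.leibniz_pow, derivation_C, pderiv_X_self, pderiv_X_of_ne one_ne_zero,
    Nat.add_one_sub_one, pow_one, smul_eq_mul, nsmul_eq_mul, Nat.cast_ofNat, mul_one, mul_zero,
    add_zero, zero_add]
  ring

theorem gaussQuad_wronskian_one (hG : G.IsHomogeneous 3) (u v a b : Fin 4 → K) :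
    gaussQuad G u v a * pderiv 1 (gaussQuad G u v b) -
      gaussQuad G u v b * pderiv 1 (gaussQuad G u v a) = X 0 * gaussWronskian G u v a b := by
  have C_two : (C 2 : MvPolynomial (Fin 2) K) = 2 := map_ofNat C 2
  simp only [gaussQuad_eq hG, gaussWronskian, map_add, map_sub, map_mul, C_two, Derivation.leibniz,
    Derivation.leibniz_pow, derivation_C, pderiv_X_self, pderiv_X_of_ne zero_ne_one,
    Nat.add_one_sub_one, pow_one, smul_eq_mul, nsmul_eq_mul, Nat.cast_ofNat, mul_one, mul_zero,
    add_zero, zero_add]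
  ring

theorem gaussSeparable_iff (hG : G.IsHomogeneous 3) (W : Submodule K (Fin 4 → K)) :
    GaussSeparable G W ↔ ∃ u v a b : Fin 4 → K, u ∈ W ∧ v ∈ W ∧
      LinearIndependent K ![u, v, a, b] ∧ gaussWronskian G u v a b ≠ 0 := by
  simp only [GaussSeparable, ← sub_ne_zero (b := gaussQuad _ _ _ _ * _),
    gaussQuad_wronskian_zero hG, gaussQuad_wronskian_one hG, mul_ne_zero_iff, neg_ne_zero,
    X_ne_zero, ne_eq, not_false_eq_true, true_and, or_self]

theorem gaussWronskian_map {L : Type*} [Field L] (φ : K →+* L) (G : MvPolynomial (Fin 4) K)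
    (u v a b : Fin 4 → K) :
    gaussWronskian (map φ G) (clVec φ u) (clVec φ v) (clVec φ a) (clVec φ b) =
      map φ (gaussWronskian G u v a b) := by
  simp [gaussWronskian, grad_map, hess_map, map_ofNat φ 2]

theorem gaussWronskian_isHomogeneous (G : MvPolynomial (Fin 4) K) (u v a b : Fin 4 → K) :
    (gaussWronskian G u v a b).IsHomogeneous 2 :=
  isHomogeneous_binaryQuadratic _ _ _

end GaussMap

section LineFrame

variable {L : Type*} [Field L]

/-- `LineFrame G u v a b`: the vectors `u`, `v` span a line on the nonsingular cubic surface
`G = 0`, and `a`, `b` complete them to a basis. -/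
structure LineFrame (G : MvPolynomial (Fin 4) L) (u v a b : Fin 4 → L) : Prop where
  isHomogeneous : G.IsHomogeneous 3
  nonsingular : Nonsingular G
  linearIndependent : LinearIndependent L ![u, v, a, b]
  lineRestrict_eq_zero : lineRestrict G u v = 0

theorem eq_zero_of_linearIndependent_quadruple {V : Type*} [AddCommGroup V] [Module L V]
    {u v a b : V} (h : LinearIndependent L ![u, v, a, b]) {p q r s : L}
    (hpqrs : p • u + q • v + r • a + s • b = 0) : p = 0 ∧ q = 0 ∧ r = 0 ∧ s = 0 := by
  have key := Fintype.linearIndependent_iff.1 h ![p, q, r, s]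
    (by simpa [Fin.sum_univ_four] using hpqrs)
  exact ⟨key 0, key 1, key 2, key 3⟩

theorem linearIndependent_pair_of_quadruple {V : Type*} [AddCommGroup V] [Module L V]
    {u v a b : V} (h : LinearIndependent L ![u, v, a, b]) : LinearIndependent L ![u, v] :=
  LinearIndependent.pair_iff.2 fun p q hpq =>
    have key := eq_zero_of_linearIndependent_quadruple (r := 0) (s := 0) h (by simpa using hpq)
    ⟨key.1, key.2.1⟩

theorem exists_det_ne_zero {p : Fin 2 → L} (hp : p ≠ 0) :
    ∃ q : Fin 2 → L, p 0 * q 1 - p 1 * q 0 ≠ 0 := by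
  contrapose! hp
  ext i
  fin_cases i
  · simpa using hp ![0, 1]
  · simpa using hp ![1, 0]

/-- A vector spanning, together with the line through `u` and `v`, the tangent plane at its
point `x`. -/
def tangentVec (G : MvPolynomial (Fin 4) L) (a b x : Fin 4 → L) : Fin 4 → L :=
  grad G x b • a - grad G x a • b

variable {G : MvPolynomial (Fin 4) L} {u v a b : Fin 4 → L} {p : Fin 2 → L}

namespace LineFrame

theorem linearIndependent_pair (h : LineFrame G u v a b) : LinearIndependent L ![u, v] :=
  linearIndependent_pair_of_quadruple h.linearIndependent

theorem grad_line_apply (h : LineFrame G u v a b) (p : Fin 2 → L) (z : Fin 4 → L) :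
    grad G (p 0 • u + p 1 • v) z =
      p 0 ^ 2 * grad G u z + p 0 * p 1 * hess G u v z + p 1 ^ 2 * grad G v z :=
  grad_smul_add_smul h.isHomogeneous _ _ u v z

theorem lineVec_ne_zero (h : LineFrame G u v a b) (hp : p ≠ 0) : p 0 • u + p 1 • v ≠ 0 :=
  smul_add_smul_ne_zero h.linearIndependent_pair hp

theorem eval_line (h : LineFrame G u v a b) (p : Fin 2 → L) :
    eval (p 0 • u + p 1 • v) G = 0 := by
  obtain ⟨eval_u, grad_u, grad_v, eval_v⟩ :=
    (lineRestrict_eq_zero_iff h.isHomogeneous).1 h.lineRestrict_eq_zero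
  rw [eval_smul_add_smul h.isHomogeneous, eval_u, grad_u, grad_v, eval_v]
  ring

theorem grad_line_ne_zero (h : LineFrame G u v a b) (hp : p ≠ 0) :
    grad G (p 0 • u + p 1 • v) ≠ 0 := fun hzero =>
  h.lineVec_ne_zero hp (h.nonsingular _ (h.eval_line p) hzero)

theorem lineRestrict_line (h : LineFrame G u v a b) (p q : Fin 2 → L) :
    lineRestrict G (p 0 • u + p 1 • v) (q 0 • u + q 1 • v) = 0 := by
  rw [lineRestrict_smul_add_smul, h.lineRestrict_eq_zero, map_zero]

theorem grad_line_apply_line (h : LineFrame G u v a b) (p q : Fin 2 → L) :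
    grad G (p 0 • u + p 1 • v) (q 0 • u + q 1 • v) = 0 :=
  ((lineRestrict_eq_zero_iff h.isHomogeneous).1 (h.lineRestrict_line p q)).2.1

theorem eq_zero_of_apply_eq_zero (h : LineFrame G u v a b) {f : (Fin 4 → L) →ₗ[L] L}
    (f_u : f u = 0) (f_v : f v = 0) (f_a : f a = 0) (f_b : f b = 0) : f = 0 := by
  have span_eq : Submodule.span L (Set.range ![u, v, a, b]) = ⊤ :=
    h.linearIndependent.span_eq_top_of_card_eq_finrank (by simp)
  refine LinearMap.ext_on_range span_eq fun i => ?_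
  fin_cases i
  exacts [f_u, f_v, f_a, f_b]

theorem grad_line_apply_ne_zero (h : LineFrame G u v a b) (hp : p ≠ 0) :
    grad G (p 0 • u + p 1 • v) a ≠ 0 ∨ grad G (p 0 • u + p 1 • v) b ≠ 0 := by
  by_contra! hab
  refine h.grad_line_ne_zero hp (h.eq_zero_of_apply_eq_zero ?_ ?_ hab.1 hab.2)
  · simpa using h.grad_line_apply_line p ![1, 0]
  · simpa using h.grad_line_apply_line p ![0, 1]

theorem tangentFrame (h : LineFrame G u v a b) (hp : p ≠ 0) {q : Fin 2 → L}
    (hpq : p 0 * q 1 - p 1 * q 0 ≠ 0) :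
    TangentFrame G (p 0 • u + p 1 • v) (q 0 • u + q 1 • v)
      (tangentVec G a b (p 0 • u + p 1 • v)) where
  isHomogeneous := h.isHomogeneous
  lineRestrict_eq_zero := h.lineRestrict_line p q
  grad_ne_zero := h.grad_line_ne_zero hp
  grad_apply_eq_zero := by
    simp [tangentVec, mul_comm]
  linearIndependent := by
    rw [Fintype.linearIndependent_iff]
    intro c hc
    rw [Fin.sum_univ_three] at hc
    simp only [Matrix.cons_val] at hc
    obtain ⟨h₀, h₁, ha, hb⟩ := eq_zero_of_linearIndependent_quadruple h.linearIndependent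
      (p := c 0 * p 0 + c 1 * q 0) (q := c 0 * p 1 + c 1 * q 1)
      (r := c 2 * grad G (p 0 • u + p 1 • v) b) (s := -(c 2 * grad G (p 0 • u + p 1 • v) a))
      (by rw [← hc, tangentVec]; module)
    have c_zero : c 0 * (p 0 * q 1 - p 1 * q 0) = 0 := by linear_combination q 1 * h₀ - q 0 * h₁
    have c_one : c 1 * (p 0 * q 1 - p 1 * q 0) = 0 := by linear_combination p 0 * h₁ - p 1 * h₀
    have c_two : c 2 = 0 := by
      obtain hne | hne := h.grad_line_apply_ne_zero hp
      · exact (mul_eq_zero.1 (neg_eq_zero.1 hb)).resolve_right hne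
      · exact (mul_eq_zero.1 ha).resolve_right hne
    intro i
    fin_cases i
    exacts [(mul_eq_zero.1 c_zero).resolve_right hpq, (mul_eq_zero.1 c_one).resolve_right hpq,
      c_two]

theorem hess_line_apply (h : LineFrame G u v a b) (p q : Fin 2 → L) (z : Fin 4 → L) :
    hess G (p 0 • u + p 1 • v) (q 0 • u + q 1 • v) z = 2 * p 0 * q 0 * grad G u z +
      (p 0 * q 1 + p 1 * q 0) * hess G u v z + 2 * p 1 * q 1 * grad G v z := by
  have hG := h.isHomogeneous
  rw [hess_smul_add_smul hG, hess_comm G u, hess_comm G v, hess_smul_add_smul hG,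
    hess_smul_add_smul hG, hess_self hG, hess_self hG, hess_comm G v u]
  ring

theorem hess_line_tangentVec (h : LineFrame G u v a b) (p q : Fin 2 → L) :
    hess G (p 0 • u + p 1 • v) (q 0 • u + q 1 • v) (tangentVec G a b (p 0 • u + p 1 • v)) =
      -(p 0 * q 1 - p 1 * q 0) * eval p (gaussWronskian G u v a b) := by
  simp only [tangentVec, map_sub, map_smul, smul_eq_mul, h.hess_line_apply, h.grad_line_apply,
    gaussWronskian, map_add, map_mul, map_pow, eval_C, eval_X]
  ring

theorem grad_line_tangentVec (h : LineFrame G u v a b) (p q : Fin 2 → L) :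
    2 * grad G (q 0 • u + q 1 • v) (tangentVec G a b (p 0 • u + p 1 • v)) =
      -(p 0 * q 1 - p 1 * q 0) * grad (gaussWronskian G u v a b) p q := by
  rw [gaussWronskian, grad_binaryQuadratic]
  simp only [tangentVec, map_sub, map_smul, smul_eq_mul, h.grad_line_apply]
  ring

theorem parabolicAt_linePoint_iff (h : LineFrame G u v a b)
    (P : Projectivization L (Fin 2 → L)) :
    ParabolicAt G (linePoint h.linearIndependent_pair P) ↔
      P ∈ zeroSet (gaussWronskian G u v a b) := by
  induction P using Projectivization.ind with | h p hp => ?_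
  obtain ⟨q, hpq⟩ := exists_det_ne_zero hp
  rw [linePoint_mk, (h.tangentFrame hp hpq).parabolicAt_iff, h.hess_line_tangentVec,
    mk_mem_zeroSet_iff (gaussWronskian_isHomogeneous G u v a b), mul_eq_zero, neg_eq_zero]
  simp only [hpq, false_or]

theorem ncard_parabolicAt (h : LineFrame G u v a b) :
    {P | OnLine (Submodule.span L {u, v}) P ∧ ParabolicAt G P}.ncard =
      (zeroSet (gaussWronskian G u v a b)).ncard := by
  simp only [ncard_onLine_and h.linearIndependent_pair, h.parabolicAt_linePoint_iff,
    Set.ofPred_mem_eq]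

end LineFrame

end LineFrame

section Counting

variable {L : Type*} [Field L] {G : MvPolynomial (Fin 4) L} {u v a b : Fin 4 → L}

/-- The binary form of degree five whose value at `p` is the derivative of `G` at
`d = tangentVec G a b x` in the direction of `x = p 0 • u + p 1 • v`; see
`LineFrame.eval_eckardtForm`. -/
def eckardtForm (G : MvPolynomial (Fin 4) L) (u v a b : Fin 4 → L) : MvPolynomial (Fin 2) L :=
  gaussQuad G u v b * gaussQuad G u v b * (C (grad G a u) * X 0 + C (grad G a v) * X 1) -
    gaussQuad G u v b * gaussQuad G u v a * (C (hess G a b u) * X 0 + C (hess G a b v) * X 1) +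
    gaussQuad G u v a * gaussQuad G u v a * (C (grad G b u) * X 0 + C (grad G b v) * X 1)

theorem eckardtForm_isHomogeneous (hG : G.IsHomogeneous 3) (u v a b : Fin 4 → L) :
    (eckardtForm G u v a b).IsHomogeneous 5 := by
  have term (c d : Fin 4 → L) (α β : L) := ((gaussQuad_isHomogeneous hG u v c).mul
    (gaussQuad_isHomogeneous hG u v d)).mul (isHomogeneous_binaryLinear α β)
  exact ((term b b _ _).sub (term b a _ _)).add (term a a _ _)

theorem zeroSet_pow {n k : ℕ} (hk : k ≠ 0) (f : MvPolynomial (Fin n) L) :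
    zeroSet (f ^ k) = zeroSet f := by
  simp only [zeroSet, map_pow, pow_eq_zero_iff hk]

theorem nonsingular_binaryLinear {α β : L}
    (hf : (C α * X 0 + C β * X 1 : MvPolynomial (Fin 2) L) ≠ 0) :
    Nonsingular (C α * X 0 + C β * X 1 : MvPolynomial (Fin 2) L) := by
  intro p _ grad_p
  have hα := LinearMap.congr_fun grad_p ![1, 0]
  have hβ := LinearMap.congr_fun grad_p ![0, 1]
  rw [grad_binaryLinear] at hα hβ
  simp only [Matrix.cons_val_zero, Matrix.cons_val_one, mul_one, mul_zero, add_zero, zero_add,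
    LinearMap.zero_apply] at hα hβ
  simp [hα, hβ] at hf

theorem exists_gaussWronskian_eq_sq [IsAlgClosed L] [CharP L 2] (G : MvPolynomial (Fin 4) L)
    (u v a b : Fin 4 → L) :
    ∃ α β : L, gaussWronskian G u v a b = (C α * X 0 + C β * X 1) ^ 2 := by
  obtain ⟨α, hα⟩ := IsAlgClosed.exists_pow_nat_eq
    (grad G u a * hess G u v b - hess G u v a * grad G u b) two_pos
  obtain ⟨β, hβ⟩ := IsAlgClosed.exists_pow_nat_eq
    (hess G u v a * grad G v b - grad G v a * hess G u v b) two_pos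
  have two : (2 : L) = 0 := CharTwo.two_eq_zero
  refine ⟨α, β, ?_⟩
  rw [gaussWronskian, CharTwo.add_sq, two, zero_mul, C_0, zero_mul, add_zero, ← hα, ← hβ, C_pow,
    C_pow, mul_pow, mul_pow]

namespace LineFrame

theorem eval_gaussQuad (h : LineFrame G u v a b) (p : Fin 2 → L) (c : Fin 4 → L) :
    eval p (gaussQuad G u v c) = grad G (p 0 • u + p 1 • v) c := by
  rw [gaussQuad_eq h.isHomogeneous, h.grad_line_apply]
  simp only [map_add, map_mul, map_pow, eval_C, eval_X]
  ring

theorem grad_tangentVec_apply (h : LineFrame G u v a b) (x z : Fin 4 → L) :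
    grad G (tangentVec G a b x) z = grad G x b * grad G x b * grad G a z -
      grad G x b * grad G x a * hess G a b z + grad G x a * grad G x a * grad G b z := by
  rw [tangentVec, sub_eq_add_neg, ← neg_smul, grad_smul_add_smul h.isHomogeneous]
  ring

theorem eval_eckardtForm (h : LineFrame G u v a b) (p : Fin 2 → L) :
    eval p (eckardtForm G u v a b) =
      grad G (tangentVec G a b (p 0 • u + p 1 • v)) (p 0 • u + p 1 • v) := by
  rw [h.grad_tangentVec_apply]
  simp only [eckardtForm, map_add, map_sub, map_mul, eval_C, eval_X, h.eval_gaussQuad, map_smul,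
    smul_eq_mul]
  ring

theorem parabolicAt_of_gaussWronskian_eq_zero (h : LineFrame G u v a b)
    (hw : gaussWronskian G u v a b = 0) {P : Projectivization L (Fin 4 → L)}
    (hP : OnLine (Submodule.span L {u, v}) P) : ParabolicAt G P := by
  obtain ⟨p, rfl⟩ : P ∈ Set.range (linePoint h.linearIndependent_pair) := by
    rwa [range_linePoint]
  rw [h.parabolicAt_linePoint_iff, hw]
  exact map_zero _

theorem tangentFrame_left (h : LineFrame G u v a b) : TangentFrame G u v (tangentVec G a b u) := by
  simpa using h.tangentFrame (p := ![1, 0]) (q := ![0, 1]) (by simp) (by simp)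

variable [IsAlgClosed L]

theorem nonsingular_gaussWronskian (h : LineFrame G u v a b) (two_ne : (2 : L) ≠ 0) :
    Nonsingular (gaussWronskian G u v a b) := by
  intro p eval_p grad_p
  by_contra hp
  obtain ⟨q, hpq⟩ := exists_det_ne_zero hp
  have two_mul_grad := h.grad_line_tangentVec p q
  rw [grad_p, LinearMap.zero_apply, mul_zero] at two_mul_grad
  exact (h.tangentFrame hp hpq).grad_right_apply_ne_zero h.nonsingular
    (by rw [h.hess_line_tangentVec, eval_p, mul_zero])
    ((mul_eq_zero.1 two_mul_grad).resolve_left two_ne)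

theorem ncard_parabolicAt_eq_two (h : LineFrame G u v a b) (two_ne : (2 : L) ≠ 0) :
    {P | OnLine (Submodule.span L {u, v}) P ∧ ParabolicAt G P}.ncard = 2 := by
  rw [h.ncard_parabolicAt]
  exact ncard_zeroSet_of_nonsingular (gaussWronskian_isHomogeneous G u v a b)
    (h.nonsingular_gaussWronskian two_ne)

theorem ncard_parabolicAt_eq_one [CharP L 2] (h : LineFrame G u v a b)
    (hw : gaussWronskian G u v a b ≠ 0) :
    {P | OnLine (Submodule.span L {u, v}) P ∧ ParabolicAt G P}.ncard = 1 := by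
  obtain ⟨α, β, w_eq⟩ := exists_gaussWronskian_eq_sq G u v a b
  rw [w_eq] at hw
  rw [h.ncard_parabolicAt, w_eq, zeroSet_pow two_ne_zero]
  exact ncard_zeroSet_of_nonsingular (isHomogeneous_binaryLinear α β)
    (nonsingular_binaryLinear (ne_zero_pow two_ne_zero hw))

theorem hess_eq_zero (h : LineFrame G u v a b) (hw : gaussWronskian G u v a b = 0) :
    hess G u v = 0 := by
  have minor_left : grad G u a * hess G u v b - hess G u v a * grad G u b = 0 := by
    simpa [gaussWronskian] using congrArg (eval ![1, 0]) hw
  have minor_right : hess G u v a * grad G v b - grad G v a * hess G u v b = 0 := by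
    simpa [gaussWronskian] using congrArg (eval ![0, 1]) hw
  have minor_ne : grad G u b * grad G v a - grad G u a * grad G v b ≠ 0 := by
    have hess_d : hess G u v (tangentVec G a b u) = 0 := by
      simp only [tangentVec, map_sub, map_smul, smul_eq_mul]
      linear_combination -minor_left
    simpa [tangentVec] using
      h.tangentFrame_left.grad_right_apply_ne_zero h.nonsingular hess_d
  have hess_a : hess G u v a * (grad G u b * grad G v a - grad G u a * grad G v b) = 0 := by
    linear_combination -grad G v a * minor_left - grad G u a * minor_right
  have hess_b : hess G u v b * (grad G u b * grad G v a - grad G u a * grad G v b) = 0 := by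
    linear_combination -grad G v b * minor_left - grad G u b * minor_right
  exact h.eq_zero_of_apply_eq_zero h.tangentFrame_left.hess_apply_left
    h.tangentFrame_left.hess_apply_right ((mul_eq_zero.1 hess_a).resolve_right minor_ne)
    ((mul_eq_zero.1 hess_b).resolve_right minor_ne)

variable [CharP L 2]

theorem hess_line_eq_zero (h : LineFrame G u v a b) (hw : gaussWronskian G u v a b = 0)
    (p q : Fin 2 → L) : hess G (p 0 • u + p 1 • v) (q 0 • u + q 1 • v) = 0 := by
  refine LinearMap.ext fun z => ?_
  rw [h.hess_line_apply, h.hess_eq_zero hw, CharTwo.two_eq_zero (R := L), LinearMap.zero_apply]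
  ring

theorem grad_gaussQuad (h : LineFrame G u v a b) (hw : gaussWronskian G u v a b = 0)
    (c : Fin 4 → L) (p q : Fin 2 → L) : grad (gaussQuad G u v c) p q = 0 := by
  rw [gaussQuad_eq h.isHomogeneous, grad_binaryQuadratic, h.hess_eq_zero hw,
    CharTwo.two_eq_zero (R := L), LinearMap.zero_apply]
  ring

theorem grad_eckardtForm (h : LineFrame G u v a b) (hw : gaussWronskian G u v a b = 0)
    (p q : Fin 2 → L) :
    grad (eckardtForm G u v a b) p q =
      grad G (tangentVec G a b (p 0 • u + p 1 • v)) (q 0 • u + q 1 • v) := by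
  rw [h.grad_tangentVec_apply, eckardtForm]
  simp only [grad_add, grad_sub, grad_mul, grad_C, grad_X, h.grad_gaussQuad hw, h.eval_gaussQuad,
    LinearMap.add_apply, LinearMap.sub_apply, LinearMap.smul_apply, LinearMap.zero_apply,
    LinearMap.proj_apply, smul_eq_mul, map_add, map_mul, map_smul, eval_C, eval_X]
  ring

theorem nonsingular_eckardtForm (h : LineFrame G u v a b) (hw : gaussWronskian G u v a b = 0) :
    Nonsingular (eckardtForm G u v a b) := by
  intro p eval_p grad_p
  by_contra hp
  obtain ⟨q, hpq⟩ := exists_det_ne_zero hp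
  rw [h.eval_eckardtForm] at eval_p
  refine (h.tangentFrame hp hpq).grad_apply_line_ne_zero h.nonsingular
    (h.hess_line_eq_zero hw p q) eval_p ?_
  rw [← h.grad_eckardtForm hw, grad_p, LinearMap.zero_apply]

theorem eckardtAt_linePoint_iff (h : LineFrame G u v a b) (hw : gaussWronskian G u v a b = 0)
    (P : Projectivization L (Fin 2 → L)) :
    EckardtAt G (linePoint h.linearIndependent_pair P) ↔ P ∈ zeroSet (eckardtForm G u v a b) := by
  induction P using Projectivization.ind with | h p hp => ?_
  obtain ⟨q, hpq⟩ := exists_det_ne_zero hp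
  rw [linePoint_mk, (h.tangentFrame hp hpq).eckardtAt_iff h.nonsingular
    (h.hess_line_eq_zero hw p q), ← h.eval_eckardtForm,
    mk_mem_zeroSet_iff (eckardtForm_isHomogeneous h.isHomogeneous u v a b)]

theorem ncard_eckardtAt_eq_five (h : LineFrame G u v a b) (hw : gaussWronskian G u v a b = 0) :
    {P | OnLine (Submodule.span L {u, v}) P ∧ EckardtAt G P}.ncard = 5 := by
  simp only [ncard_onLine_and h.linearIndependent_pair, h.eckardtAt_linePoint_iff hw,
    Set.ofPred_mem_eq]
  exact ncard_zeroSet_of_nonsingular (eckardtForm_isHomogeneous h.isHomogeneous u v a b)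
    (h.nonsingular_eckardtForm hw)

end LineFrame

theorem finite_eckardtAt_and_ncard_le {F : MvPolynomial (Fin 4) L}
    {W : Submodule L (Fin 4 → L)} {n : ℕ} (hn : n ≠ 0)
    (ncard_eq : {P | OnLine W P ∧ ParabolicAt F P}.ncard = n) :
    {P | OnLine W P ∧ EckardtAt F P}.Finite ∧ {P | OnLine W P ∧ EckardtAt F P}.ncard ≤ n := by
  have subset : {P | OnLine W P ∧ EckardtAt F P} ⊆ {P | OnLine W P ∧ ParabolicAt F P} :=
    fun P hP => ⟨hP.1, hP.2.parabolicAt⟩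
  have finite := Set.finite_of_ncard_ne_zero (ncard_eq ▸ hn)
  exact ⟨finite.subset subset, ncard_eq ▸ Set.ncard_le_ncard subset finite⟩

end Counting

section Closure

variable {K L : Type*} [Field K] [Field L] {n : ℕ} (φ : K →+* L)

theorem Nonsingular.of_map {F : MvPolynomial (Fin n) K} (hF : Nonsingular (map φ F)) :
    Nonsingular F := by
  intro v eval_v grad_v
  by_contra hv
  exact clVec_ne_zero φ hv (hF _ (by rw [clVec_eval, eval_v, map_zero])
    ((grad_map_eq_zero_iff φ F).2 grad_v))

theorem span_clVec_image_span (s : Set (Fin n → K)) :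
    Submodule.span L (clVec φ '' (Submodule.span K s : Set (Fin n → K))) =
      Submodule.span L (clVec φ '' s) := by
  refine le_antisymm (Submodule.span_le.2 ?_)
    (Submodule.span_mono (Set.image_mono Submodule.subset_span))
  rintro _ ⟨x, hx, rfl⟩
  induction hx using Submodule.span_induction with
  | mem x hx => exact Submodule.subset_span (Set.mem_image_of_mem _ hx)
  | zero =>
    rw [SetLike.mem_coe, ← zero_smul K (0 : Fin n → K), clVec_smul, map_zero, zero_smul]
    exact Submodule.zero_mem _
  | add x y _ _ hx hy =>
    rw [clVec_add]
    exact Submodule.add_mem _ hx hy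
  | smul c x _ hx =>
    rw [clVec_smul]
    exact Submodule.smul_mem _ _ hx

theorem definedOver_span_pair (x y : Fin n → K) :
    DefinedOver φ (Submodule.span L {clVec φ x, clVec φ y}) :=
  ⟨Submodule.span K {x, y}, by rw [span_clVec_image_span, Set.image_pair]⟩

theorem clLine_span_pair (u v : Fin 4 → K) :
    clLine (Submodule.span K {u, v}) =
      Submodule.span (AlgebraicClosure K) {clVec (algebraMap K (AlgebraicClosure K)) u,
        clVec (algebraMap K (AlgebraicClosure K)) v} := by
  rw [clLine, span_clVec_image_span, Set.image_pair]

theorem exists_linearIndependent_quadruple {u v : Fin 4 → K} (huv : LinearIndependent K ![u, v]) :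
    ∃ a b, LinearIndependent K ![u, v, a, b] := by
  obtain ⟨a, ha⟩ := exists_linearIndependent_snoc_of_lt_finrank huv
    (by rw [Module.finrank_fin_fun]; norm_num)
  obtain ⟨b, hb⟩ := exists_linearIndependent_snoc_of_lt_finrank ha
    (by rw [Module.finrank_fin_fun]; norm_num)
  have snoc_eq : ![u, v, a, b] = Fin.snoc (Fin.snoc ![u, v] a : Fin 3 → Fin 4 → K) b := by
    ext1 i
    fin_cases i <;> rfl
  exact ⟨a, b, snoc_eq ▸ hb⟩

end Closure

section SmoothCubic

variable {K : Type*} [Field K] {F : MvPolynomial (Fin 4) K} {W : Submodule K (Fin 4 → K)}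

theorem SmoothCubic.nonsingular_clF (hF : SmoothCubic F) : Nonsingular (clF F) :=
  fun v eval_v grad_v => hF.2 v eval_v ((grad_eq_zero_iff _ v).1 grad_v)

theorem SmoothCubic.isParabolic_or_isHyperbolic (hF : SmoothCubic F) (hl : IsLine W)
    (hS : LineOnSurf F W) {P : Projectivization K (Fin 4 → K)} (hP : OnLine W P) :
    IsParabolic F P ∨ IsHyperbolic F P := by
  let φ := algebraMap K (AlgebraicClosure K)
  obtain ⟨x', hx', linearIndependent⟩ := hl.exists_linearIndependent hP P.rep_nonzero
  have lineRestrict_eq := hS _ _ hP hx'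
  have eval_eq := ((lineRestrict_eq_zero_iff hF.1).1 lineRestrict_eq).1
  obtain ⟨d, frame⟩ := exists_tangentFrame hF.1 linearIndependent lineRestrict_eq
    fun grad_eq => P.rep_nonzero (hF.nonsingular_clF.of_map φ _ eval_eq grad_eq)
  have parabolic_iff : IsParabolic F P ↔ hess F P.rep x' d = 0 := by
    rw [← map_eq_zero φ, ← hess_map]
    exact (frame.map φ).parabolicAt_iff
  rw [parabolic_iff, or_iff_not_imp_left]
  intro hess_ne
  have asymSet_eq := (frame.map φ).asymSet_eq_pair
    (by rwa [hess_map, ne_eq, map_eq_zero])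
  rw [hess_map, grad_map, ← map_div₀, ← map_neg, ← clVec_smul, ← clVec_add] at asymSet_eq
  refine ⟨_, _, ?_, asymSet_eq, definedOver_span_pair φ _ _, definedOver_span_pair φ _ _⟩
  rw [clVec_add, clVec_smul]
  exact span_pair_ne_span_smul_add (frame.map φ).linearIndependent _

theorem SmoothCubic.lineFrame_clF (hF : SmoothCubic F) (hS : LineOnSurf F W)
    {u v a b : Fin 4 → K} (hu : u ∈ W) (hv : v ∈ W) (huvab : LinearIndependent K ![u, v, a, b]) :
    LineFrame (clF F) (clVec (algebraMap K (AlgebraicClosure K)) u)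
      (clVec (algebraMap K (AlgebraicClosure K)) v) (clVec (algebraMap K (AlgebraicClosure K)) a)
      (clVec (algebraMap K (AlgebraicClosure K)) b) where
  isHomogeneous := hF.1.map _
  nonsingular := hF.nonsingular_clF
  linearIndependent := by
    convert linearIndependent_clVec (algebraMap K (AlgebraicClosure K)) huvab using 1
    ext1 i
    fin_cases i <;> rfl
  lineRestrict_eq_zero := by rw [clF, lineRestrict_map, hS _ _ hu hv, map_zero]

theorem SmoothCubic.exists_lineFrame (hF : SmoothCubic F) (hl : IsLine W) (hS : LineOnSurf F W) :
    ∃ u v a b : Fin 4 → AlgebraicClosure K, LineFrame (clF F) u v a b ∧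
      clLine W = Submodule.span (AlgebraicClosure K) {u, v} ∧
      (GaussSeparable F W ↔ gaussWronskian (clF F) u v a b ≠ 0) := by
  let φ := algebraMap K (AlgebraicClosure K)
  obtain ⟨u, v, a, b, hu, hv, huvab, separable_iff⟩ : ∃ u v a b, u ∈ W ∧ v ∈ W ∧
      LinearIndependent K ![u, v, a, b] ∧
      (GaussSeparable F W ↔ gaussWronskian F u v a b ≠ 0) := by
    by_cases hsep : GaussSeparable F W
    · obtain ⟨u, v, a, b, hu, hv, huvab, hw⟩ := (gaussSeparable_iff hF.1 W).1 hsep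
      exact ⟨u, v, a, b, hu, hv, huvab, iff_of_true hsep hw⟩
    · have : Nontrivial W := Module.nontrivial_of_finrank_pos (R := K) (hl ▸ two_pos)
      obtain ⟨u, hu, u_ne⟩ := W.exists_mem_ne_zero_of_ne_bot
        (Submodule.nontrivial_iff_ne_bot.1 this)
      obtain ⟨v, hv, huv⟩ := hl.exists_linearIndependent hu u_ne
      obtain ⟨a, b, huvab⟩ := exists_linearIndependent_quadruple huv
      exact ⟨u, v, a, b, hu, hv, huvab, iff_of_false hsep
        fun hw => hsep ((gaussSeparable_iff hF.1 W).2 ⟨u, v, a, b, hu, hv, huvab, hw⟩)⟩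
  refine ⟨clVec φ u, clVec φ v, clVec φ a, clVec φ b, hF.lineFrame_clF hS hu hv huvab, ?_, ?_⟩
  · rw [hl.eq_span_pair hu hv (linearIndependent_pair_of_quadruple huvab), clLine_span_pair]
  · rw [separable_iff, clF, gaussWronskian_map, ne_eq, ne_eq,
      map_eq_zero_iff _ (map_injective φ φ.injective)]

end SmoothCubic

end CubicSurf

open CubicSurf MvPolynomial in
/-- Let `S` be a smooth cubic surface over `K` and `ℓ ⊆ S` a `K`-line.
Then every `P ∈ ℓ(K)` is parabolic or `K`-hyperbolic.  Moreover:
(i) if `char K ≠ 2` then the Gauss map `γ_ℓ` is separable, exactly two points of `ℓ(K̄)`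
are parabolic, and `ℓ` contains at most two Eckardt points;
(ii) if `char K = 2` and `γ_ℓ` is separable then exactly one point of `ℓ(K̄)` is
parabolic and `ℓ` contains at most one Eckardt point;
(iii) if `char K = 2` and `γ_ℓ` is inseparable then every point of `ℓ(K̄)` is parabolic
and `ℓ` contains exactly 5 Eckardt points. -/
theorem parabolic_points_on_line
    {K : Type*} [Field K]
    (F : MvPolynomial (Fin 4) K) (hF : SmoothCubic F)
    (W : Submodule K (Fin 4 → K)) (hl : IsLine W) (hS : LineOnSurf F W) :
    (∀ P : Projectivization K (Fin 4 → K), OnLine W P →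
      IsParabolic F P ∨ IsHyperbolic F P) ∧
    (ringChar K ≠ 2 →
      GaussSeparable F W ∧
      {P | OnLine (clLine W) P ∧ ParabolicAt (clF F) P}.ncard = 2 ∧
      {P | OnLine (clLine W) P ∧ EckardtAt (clF F) P}.Finite ∧
      {P | OnLine (clLine W) P ∧ EckardtAt (clF F) P}.ncard ≤ 2) ∧
    (ringChar K = 2 → GaussSeparable F W →
      {P | OnLine (clLine W) P ∧ ParabolicAt (clF F) P}.ncard = 1 ∧
      {P | OnLine (clLine W) P ∧ EckardtAt (clF F) P}.Finite ∧
      {P | OnLine (clLine W) P ∧ EckardtAt (clF F) P}.ncard ≤ 1) ∧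
    (ringChar K = 2 → ¬ GaussSeparable F W →
      (∀ P, OnLine (clLine W) P → ParabolicAt (clF F) P) ∧
      {P | OnLine (clLine W) P ∧ EckardtAt (clF F) P}.ncard = 5) := by
  obtain ⟨u, v, a, b, h, hW, separable_iff⟩ := hF.exists_lineFrame hl hS
  rw [hW, separable_iff]
  refine ⟨fun P hP => hF.isParabolic_or_isHyperbolic hl hS hP, fun hchar => ?_, fun hchar hw => ?_,
    fun hchar hw => ?_⟩
  · have two_ne : (2 : AlgebraicClosure K) ≠ 0 := by
      rw [← map_ofNat (algebraMap K (AlgebraicClosure K)) 2, map_ne_zero]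
      exact Ring.two_ne_zero hchar
    have ncard_eq := h.ncard_parabolicAt_eq_two two_ne
    exact ⟨(h.nonsingular_gaussWronskian two_ne).ne_zero, ncard_eq,
      finite_eckardtAt_and_ncard_le two_ne_zero ncard_eq⟩
  · have : CharP K 2 := ringChar.of_eq hchar
    have ncard_eq := h.ncard_parabolicAt_eq_one hw
    exact ⟨ncard_eq, finite_eckardtAt_and_ncard_le one_ne_zero ncard_eq⟩
  · have : CharP K 2 := ringChar.of_eq hchar
    rw [not_not] at hw
    exact ⟨fun P => h.parabolicAt_of_gaussWronskian_eq_zero hw, h.ncard_eckardtAt_eq_five hw⟩
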